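/- There exist constants c ∈ (0,1), β > 0, C > 0 and N₀ ∈ ℕ such that for every even integer N ≥ N₀ and every integer n with 0 ≤ n ≤ c·N, the (n+1)-th smallest eigenvalue E_nᵈ (counting multiplicity, with E_0ᵈ the smallest) of the Hermitian matrix Hᵈ satisfies |E_nᵈ − (n + 1/2)| ≤ C·e^(−β·N). -/

import Mathlib

/-!
The Hermite functions are eigenfunctions of the continuous oscillator and of the continuous Fourier
transform. Their samples `hst N m` on the grid are, for `m ≤ 4 K` with `K` a small multiple of `N`,
exponentially good approximate eigenvectors of the discrete oscillator, and the proof shows that they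
exhaust the bottom of the spectrum.

*Approximate eigenvectors.* The generating function `genFn z` of the Hermite functions is a Gaussian,
and Poisson summation (`genFn_poisson`) shows that the discrete Fourier transform maps its samples to
those of `genFn (i z)` up to an error of size `exp (5 |z|² / 2 - π N / 16)` (`norm_genErr_le`). The
sampled Hermite states are its Taylor coefficients, so the Cauchy estimates at radius of order `√N`
bound their Fourier defects (`norm_fErr_le`). By the three-term recurrence, the residual
`Hᵈ f_m - (m + 1/2) f_m` is a short combination of such defects (`Fcd_residual`, `residual_le`).
States with different energies are then almost orthogonal, and the symmetry of the position operator
in the three-term recurrence prevents the norms from decreasing, so the system of states is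
well-conditioned (`gram_lower`).

*Upper bound.* A min-max argument with the span of `f 0, …, f n` gives `E_n ≤ n + 1/2 + ε'`
(`eigenvalue_upper`).

*Lower bound.* Residuals alone do not exclude further low eigenvalues. This is done by `crude_bound`:
a vector orthogonal to the first `4 K + 1` states has energy at least of order `N`. Multiply such a
vector by the cutoff `e^{-s} ∑_{k ≤ K} s^k / k!` at `s = x²/2`, which is a polynomial of degree `2 K`
times the Gaussian. The product has vanishing moments of order up to `2 K`, so its discrete Fourier
transform almost vanishes at momenta up to a small multiple of `√N`. Its kinetic energy is therefore
of order `N` times its mass; the mass removed by the cutoff costs potential energy of order `K` per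
unit, and the cutoff is slowly varying, so it hardly increases the kinetic energy. Together with the
residual bounds, a second dimension count gives `E_n ≥ n + 1/2 - ε'` (`eigenvalue_lower`).
-/

open MeasureTheory Complex
open scoped BigOperators Matrix Kronecker

noncomputable section

/-- The `n`-th physicists' Hermite polynomial. -/
def hermiteH (n : ℕ) (x : ℝ) : ℝ :=
  (-1 : ℝ) ^ n * Real.exp (x ^ 2) * iteratedDeriv n (fun y => Real.exp (-y ^ 2)) x

/-- The `n`-th Hermite function. -/
def hermiteFn (n : ℕ) (x : ℝ) : ℝ :=
  (1 / Real.sqrt (2 ^ n * n.factorial * Real.sqrt Real.pi)) * Real.exp (-x ^ 2 / 2) * hermiteH n x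

/-- The grid points `x_j = j·√(2π/N)`, where `j = i - N/2` for `i : Fin N`. -/
def gridPt (N : ℕ) (i : Fin N) : ℝ :=
  (((i : ℤ) - (N : ℤ) / 2 : ℤ) : ℝ) * Real.sqrt (2 * Real.pi / N)

/-- The discrete Hermite state `ψₙᵈ ∈ ℂ^N`. -/
def psid (N n : ℕ) : Fin N → ℂ :=
  fun i => (((2 * Real.pi / N) ^ ((1 : ℝ) / 4) * hermiteFn n (gridPt N i) : ℝ) : ℂ)

/-- The discrete position operator `xᵈ`. -/
def xd (N : ℕ) : Matrix (Fin N) (Fin N) ℂ :=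
  Matrix.diagonal fun i => (gridPt N i : ℂ)

/-- The centered discrete Fourier transform `F_cᵈ`. -/
def Fcd (N : ℕ) : Matrix (Fin N) (Fin N) ℂ := fun j k =>
  ((1 / Real.sqrt N : ℝ) : ℂ) *
    Complex.exp (2 * Real.pi * Complex.I *
      ((((j : ℤ) - (N : ℤ) / 2 : ℤ) : ℂ) * (((k : ℤ) - (N : ℤ) / 2 : ℤ) : ℂ)) / N)

/-- The discrete momentum operator `pᵈ = (F_cᵈ)⁻¹ xᵈ F_cᵈ`. -/
def pd (N : ℕ) : Matrix (Fin N) (Fin N) ℂ := (Fcd N)⁻¹ * xd N * Fcd N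

/-- The standard inner product on `ℂ^ι`, antilinear in the first argument. -/
def einner {ι : Type*} [Fintype ι] (v w : ι → ℂ) : ℂ :=
  ∑ i, (starRingEnd ℂ) (v i) * w i

/-- The Euclidean norm on `ℂ^ι`. -/
def enorm {ι : Type*} [Fintype ι] (v : ι → ℂ) : ℝ :=
  Real.sqrt (einner v v).re

/-- The discrete harmonic-oscillator Hamiltonian `Hᵈ = ((xᵈ)² + (pᵈ)²)/2`. -/
def Hd (N : ℕ) : Matrix (Fin N) (Fin N) ℂ := (2 : ℂ)⁻¹ • (xd N ^ 2 + pd N ^ 2)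

/-! ### Locating ordered eigenvalues by approximate eigenvectors -/

/-- More vectors than linear conditions: some nontrivial combination satisfies all conditions. This
is the dimension count behind both min-max arguments. -/
theorem exists_linear_relation {m n : ℕ} (h : n < m) (A : Fin m → Fin n → ℂ) :
    ∃ a : Fin m → ℂ, a ≠ 0 ∧ ∀ i, ∑ k, a k * A k i = 0 := by
  have hk := LinearMap.ker_ne_bot_of_finrank_lt (K := ℂ)
    (f := Matrix.mulVecLin (Matrix.of A)ᵀ) (by simpa using h)
  obtain ⟨a, ha, ha0⟩ := (Submodule.ne_bot_iff _).1 hk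
  refine ⟨a, ha0, fun i => ?_⟩
  have := congrFun (LinearMap.mem_ker.1 ha) i
  simpa [Matrix.vecMul, dotProduct] using this

/-- The Cauchy–Schwarz inequality for finite complex sums, without conjugates. -/
theorem norm_sum_mul_sq_le {ι : Type*} (s : Finset ι) (a b : ι → ℂ) :
    ‖∑ i ∈ s, a i * b i‖ ^ 2 ≤ (∑ i ∈ s, ‖a i‖ ^ 2) * ∑ i ∈ s, ‖b i‖ ^ 2 := by
  calc ‖∑ i ∈ s, a i * b i‖ ^ 2 ≤ (∑ i ∈ s, ‖a i‖ * ‖b i‖) ^ 2 := by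
        gcongr
        exact (norm_sum_le _ _).trans_eq (by simp)
    _ ≤ _ := Finset.sum_mul_sq_le_sq_mul_sq _ _ _

section Abstract
variable {E : Type*} [NormedAddCommGroup E] [InnerProductSpace ℂ E]

/-- Testing the residual of an approximate eigenvector `f` against a true eigenvector `w` bounds the
overlap `⟨w, f⟩` by the residual divided by the distance of the two eigenvalues. -/
theorem inner_eigenvector_residual {T : E →ₗ[ℂ] E} (hT : T.IsSymmetric) {w f : E} {l : ℝ}
    (hw : T w = (l : ℂ) • w) (μ : ℝ) :
    ‖inner ℂ w (T f - (μ : ℂ) • f)‖ = |l - μ| * ‖inner ℂ w f‖ := by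
  have : inner ℂ w (T f - (μ : ℂ) • f) = ((l - μ : ℝ) : ℂ) * inner ℂ w f := by
    rw [inner_sub_right, ← hT, hw, inner_smul_left, inner_smul_right]
    simp; ring
  rw [this, norm_mul, Complex.norm_real, Real.norm_eq_abs]

/-- If the `(n+1)`-th eigenvalue exceeded `n + 1/2 + ε'`, then some nonzero combination of
`f 0, …, f n` would be orthogonal to the first `n` eigenvectors, while each of its overlaps with the
remaining ones is small because the residuals are. As the `f m` are well-conditioned, this
combination cannot be that small. -/
theorem eigenvalue_upper {N : ℕ} (w : OrthonormalBasis (Fin N) ℂ E) (lam : Fin N → ℝ)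
    (hmono : Monotone lam) (T : E →ₗ[ℂ] E) (hT : T.IsSymmetric)
    (hw : ∀ i, T (w i) = (lam i : ℂ) • w i) (f : ℕ → E) (n : ℕ) (hn : n < N)
    {ε ε' : ℝ} (hε' : 0 < ε')
    (hres : ∀ m ≤ n, ‖T (f m) - (((m : ℝ) + 1 / 2 : ℝ) : ℂ) • f m‖ ≤ ε)
    (hgram : ∀ a : ℕ → ℂ, 1 / 4 * ∑ m ∈ Finset.range (n + 1), ‖a m‖ ^ 2 ≤
      ‖∑ m ∈ Finset.range (n + 1), a m • f m‖ ^ 2)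
    (hsmall : 4 * ((n : ℝ) + 1) * ε ^ 2 < ε' ^ 2) :
    lam ⟨n, hn⟩ ≤ n + 1 / 2 + ε' := by
  by_contra! hcon
  obtain ⟨a, ha0, ha⟩ := exists_linear_relation (Nat.lt_succ_self n)
    (fun k i => inner ℂ (w ⟨i, i.2.trans hn⟩) (f k))
  set a' : ℕ → ℂ := fun m => if h : m < n + 1 then a ⟨m, h⟩ else 0 with ha'
  set y := ∑ m ∈ Finset.range (n + 1), a' m • f m with hy
  set S := ∑ m ∈ Finset.range (n + 1), ‖a' m‖ ^ 2 with hS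
  have hSpos : 0 < S := by
    obtain ⟨k, hk⟩ := Function.ne_iff.1 ha0
    refine Finset.sum_pos' (fun _ _ => by positivity) ⟨k, Finset.mem_range.2 k.2, ?_⟩
    simp only [ha']
    have : 0 < ‖a k‖ := norm_pos_iff.2 hk
    simp only [k.2, dif_pos]
    positivity
  have hinner : ∀ i, inner ℂ (w i) y =
      ∑ m ∈ Finset.range (n + 1), a' m * inner ℂ (w i) (f m) := by
    intro i
    rw [hy, inner_sum]
    exact Finset.sum_congr rfl fun m _ => inner_smul_right _ _ _
  have hzero : ∀ i : Fin N, (i : ℕ) < n → inner ℂ (w i) y = 0 := by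
    intro i hi
    rw [hinner, Finset.sum_range]
    have := ha ⟨i, hi⟩
    simp only [ha', Fin.is_lt, dif_pos]
    exact this
  -- each component of `y` along a high eigenvector is controlled by the residuals
  have hcomp : ∀ i : Fin N, ε' ^ 2 * ‖inner ℂ (w i) y‖ ^ 2 ≤
      S * ∑ m ∈ Finset.range (n + 1),
        ‖inner ℂ (w i) (T (f m) - (((m : ℝ) + 1 / 2 : ℝ) : ℂ) • f m)‖ ^ 2 := by
    intro i
    rcases lt_or_ge (i : ℕ) n with hi | hi
    · rw [hzero i hi]
      simp only [norm_zero]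
      have : 0 ≤ S * ∑ m ∈ Finset.range (n + 1),
        ‖inner ℂ (w i) (T (f m) - (((m : ℝ) + 1 / 2 : ℝ) : ℂ) • f m)‖ ^ 2 := by positivity
      simpa using this
    · have h1 : lam ⟨n, hn⟩ ≤ lam i := hmono (by simpa [Fin.le_def] using hi)
      rw [hinner]
      calc _ ≤ ε' ^ 2 * (S * ∑ m ∈ Finset.range (n + 1), ‖inner ℂ (w i) (f m)‖ ^ 2) := by
            gcongr; exact norm_sum_mul_sq_le _ _ _
        _ = S * ∑ m ∈ Finset.range (n + 1), (ε' * ‖inner ℂ (w i) (f m)‖) ^ 2 := by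
            simp only [mul_pow, ← Finset.mul_sum]; ring
        _ ≤ _ := by
            gcongr with m hm
            rw [inner_eigenvector_residual hT (hw i)]
            gcongr
            have hm' : (m : ℝ) ≤ n := by
              exact_mod_cast Nat.lt_succ_iff.1 (Finset.mem_range.1 hm)
            exact le_trans (by linarith) (le_abs_self _)
  have hsum : ε' ^ 2 * ‖y‖ ^ 2 ≤ S * ((n + 1) * ε ^ 2) := by
    calc ε' ^ 2 * ‖y‖ ^ 2 = ∑ i, ε' ^ 2 * ‖inner ℂ (w i) y‖ ^ 2 := by
          rw [← w.sum_sq_norm_inner_right, Finset.mul_sum]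
      _ ≤ ∑ i, S * ∑ m ∈ Finset.range (n + 1),
        ‖inner ℂ (w i) (T (f m) - (((m : ℝ) + 1 / 2 : ℝ) : ℂ) • f m)‖ ^ 2 :=
          Finset.sum_le_sum fun i _ => hcomp i
      _ = S * ∑ m ∈ Finset.range (n + 1), ‖T (f m) - (((m : ℝ) + 1 / 2 : ℝ) : ℂ) • f m‖ ^ 2 := by
          rw [← Finset.mul_sum, Finset.sum_comm]
          simp only [w.sum_sq_norm_inner_right]
      _ ≤ S * ∑ m ∈ Finset.range (n + 1), ε ^ 2 := by
          gcongr with m hm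
          exact hres m (Nat.lt_succ_iff.1 (Finset.mem_range.1 hm))
      _ = _ := by simp
  have hg := hgram a'
  rw [← hy, ← hS] at hg
  nlinarith [mul_le_mul_of_nonneg_left hg (sq_nonneg ε'), mul_pos hSpos (sub_pos.2 hsmall)]

/-- If `v` has small overlap with each member of a well-conditioned system, then its orthogonal
projection `p` to the span of the system is small. -/
theorem projection_small {M : ℕ} (f : ℕ → E) {η : ℝ} (v : E)
    (hgram : ∀ a : ℕ → ℂ, 1 / 4 * ∑ m ∈ Finset.range (M + 1), ‖a m‖ ^ 2 ≤
      ‖∑ m ∈ Finset.range (M + 1), a m • f m‖ ^ 2)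
    (hη : ∀ m ≤ M, ‖inner ℂ (f m) v‖ ^ 2 ≤ η) :
    ∃ p : E, ‖p‖ ^ 2 ≤ 4 * ((M : ℝ) + 1) * η ∧ ‖v - p‖ ^ 2 = ‖v‖ ^ 2 - ‖p‖ ^ 2 ∧
      ∀ m ≤ M, inner ℂ (f m) (v - p) = 0 := by
  set U : Submodule ℂ E := Submodule.span ℂ (Set.range fun m : Fin (M + 1) => f m) with hU
  have : FiniteDimensional ℂ U := FiniteDimensional.span_of_finite ℂ (Set.finite_range _)
  set p := U.starProjection v with hp
  have hpU : p ∈ U := U.starProjection_apply_mem v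
  have horth : ∀ u ∈ U, inner ℂ u (v - p) = 0 := fun u hu =>
    (U.mem_orthogonal _).1 (U.sub_starProjection_mem_orthogonal v) u hu
  have hpv : inner ℂ p v = (‖p‖ : ℂ) ^ 2 := by
    have := horth p hpU
    rw [inner_sub_right, sub_eq_zero] at this
    rw [this, inner_self_eq_norm_sq_to_K]; rfl
  obtain ⟨c, hc⟩ := (Submodule.mem_span_range_iff_exists_fun ℂ).1 hpU
  set a : ℕ → ℂ := fun m => if h : m < M + 1 then c ⟨m, h⟩ else 0 with ha
  have hpa : p = ∑ m ∈ Finset.range (M + 1), a m • f m := by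
    rw [← hc, Finset.sum_range]
    simp only [ha, Fin.is_lt, dif_pos]
  set S := ∑ m ∈ Finset.range (M + 1), ‖a m‖ ^ 2 with hS
  have hS4 : S ≤ 4 * ‖p‖ ^ 2 := by
    have := hgram a
    rw [← hpa, ← hS] at this; linarith
  have h4 : (‖p‖ ^ 2) ^ 2 ≤ S * ((M + 1) * η) := by
    calc (‖p‖ ^ 2) ^ 2 = ‖inner ℂ p v‖ ^ 2 := by rw [hpv]; simp
      _ = ‖∑ m ∈ Finset.range (M + 1), (starRingEnd ℂ) (a m) * inner ℂ (f m) v‖ ^ 2 := by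
          rw [hpa, sum_inner]; simp only [inner_smul_left]
      _ ≤ (∑ m ∈ Finset.range (M + 1), ‖(starRingEnd ℂ) (a m)‖ ^ 2) *
            ∑ m ∈ Finset.range (M + 1), ‖inner ℂ (f m) v‖ ^ 2 := norm_sum_mul_sq_le _ _ _
      _ ≤ S * ∑ m ∈ Finset.range (M + 1), η := by
          simp only [RCLike.norm_conj]
          gcongr with m hm
          exact hη m (Nat.lt_succ_iff.1 (Finset.mem_range.1 hm))
      _ = _ := by simp
  have hη0 : 0 ≤ η := (sq_nonneg _).trans (hη 0 (Nat.zero_le _))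
  refine ⟨p, ?_, ?_, fun m hm => horth _ (Submodule.subset_span ⟨⟨m, by omega⟩, rfl⟩)⟩
  · rcases eq_or_lt_of_le (sq_nonneg ‖p‖) with h0 | h0
    · rw [← h0]; positivity
    · have : (‖p‖ ^ 2) * ‖p‖ ^ 2 ≤ ‖p‖ ^ 2 * (4 * (M + 1) * η) := by
        have : S * ((M + 1) * η) ≤ 4 * ‖p‖ ^ 2 * ((M + 1) * η) := by gcongr
        nlinarith
      exact le_of_mul_le_mul_left this h0
  · have h1 := @norm_sub_sq ℂ E _ _ _ v p
    have h2 : RCLike.re (inner ℂ v p) = ‖p‖ ^ 2 := by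
      rw [← inner_conj_symm, hpv]
      simp [← ofReal_pow]
    rw [h1, h2]; ring

/-- If the `(n+1)`-th eigenvalue were below `n + 1/2 - ε'`, some nonzero `v` spanned by the first
`n + 1` eigenvectors would be orthogonal to `f 0, …, f (n - 1)`, and almost orthogonal to
`f n, …, f M` because the residuals are small. Removing its projection to the span of
`f 0, …, f M` barely changes `v`, so the energy bound `Λ` on the orthogonal complement of that span
contradicts the energy of `v`, which is less than `n + 1/2`. -/
theorem eigenvalue_lower {N M : ℕ} (w : OrthonormalBasis (Fin N) ℂ E) (lam : Fin N → ℝ)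
    (hmono : Monotone lam) (T : E →ₗ[ℂ] E) (hT : T.IsSymmetric)
    (hw : ∀ i, T (w i) = (lam i : ℂ) • w i) (f : ℕ → E) (n : ℕ) (hn : n < N)
    {ε ε' κ Λ B : ℝ} (hε' : 0 < ε')
    (hres : ∀ m ≤ M, ‖T (f m) - (((m : ℝ) + 1 / 2 : ℝ) : ℂ) • f m‖ ≤ ε)
    (hgram : ∀ a : ℕ → ℂ, 1 / 4 * ∑ m ∈ Finset.range (M + 1), ‖a m‖ ^ 2 ≤
      ‖∑ m ∈ Finset.range (M + 1), a m • f m‖ ^ 2)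
    (hΛ0 : 0 ≤ Λ) (hB0 : 0 ≤ B)
    (hΛ : ∀ v, (∀ m ≤ M, inner ℂ (f m) v = 0) → Λ * ‖v‖ ^ 2 ≤ (inner ℂ v (T v)).re)
    (hpos : ∀ v, 0 ≤ (inner ℂ v (T v)).re)
    (hB : ∀ v, (inner ℂ v (T v)).re ≤ B * ‖v‖ ^ 2)
    (hκ : 4 * ((M : ℝ) + 1) * ε ^ 2 ≤ κ * ε' ^ 2)
    (hgap : 2 * (n : ℝ) + 1 + 2 * B * κ ≤ Λ * (1 - κ)) :
    (n : ℝ) + 1 / 2 - ε' ≤ lam ⟨n, hn⟩ := by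
  by_contra! hcon
  set emb : Fin (n + 1) → Fin N := fun i => ⟨i, by omega⟩ with hemb
  have hinj : Function.Injective emb := fun i j h => by
    simpa [hemb, Fin.ext_iff] using h
  obtain ⟨b, hb0, hb⟩ := exists_linear_relation (Nat.lt_succ_self n)
    (fun k i => inner ℂ (f i) (w (emb k)))
  set v := ∑ i, b i • w (emb i) with hv
  have hon : Orthonormal ℂ fun i => w (emb i) := w.orthonormal.comp _ hinj
  have hvv : ‖v‖ ^ 2 = ∑ i, ‖b i‖ ^ 2 := by
    have h := hon.inner_sum b b Finset.univ
    rw [← hv, inner_self_eq_norm_sq_to_K] at h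
    have h2 : ((‖v‖ ^ 2 : ℝ) : ℂ) = ((∑ i, ‖b i‖ ^ 2 : ℝ) : ℂ) := by
      push_cast
      refine h.trans (Finset.sum_congr rfl fun i _ => ?_)
      rw [mul_comm, Complex.mul_conj, Complex.normSq_eq_norm_sq]; push_cast; rfl
    exact_mod_cast h2
  have hvpos : 0 < ‖v‖ ^ 2 := by
    rw [hvv]
    obtain ⟨k, hk⟩ := Function.ne_iff.1 hb0
    refine Finset.sum_pos' (fun _ _ => by positivity) ⟨k, by simp, ?_⟩
    have : 0 < ‖b k‖ := norm_pos_iff.2 hk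
    positivity
  have hlam : ∀ i, lam (emb i) ≤ lam ⟨n, hn⟩ := fun i =>
    hmono (by simp only [hemb, Fin.le_def]; omega)
  have hTv : (inner ℂ v (T v)).re ≤ lam ⟨n, hn⟩ * ‖v‖ ^ 2 := by
    have h1 : T v = ∑ i, (b i * lam (emb i)) • w (emb i) := by
      rw [hv, map_sum]
      exact Finset.sum_congr rfl fun i _ => by rw [map_smul, hw, smul_smul]
    have h := hon.inner_sum b (fun i => b i * lam (emb i)) Finset.univ
    rw [h1, hv, h, hvv, Finset.mul_sum, Complex.re_sum]
    refine Finset.sum_le_sum fun i _ => ?_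
    have : (starRingEnd ℂ) (b i) * (b i * lam (emb i)) = ((lam (emb i) * ‖b i‖ ^ 2 : ℝ) : ℂ) := by
      rw [← mul_assoc, mul_comm ((starRingEnd ℂ) (b i)), Complex.mul_conj,
        Complex.normSq_eq_norm_sq]; push_cast; ring
    rw [this, Complex.ofReal_re]
    gcongr
    exact hlam i
  have hfv : ∀ m ≤ M, ‖inner ℂ (f m) v‖ ^ 2 ≤ ε ^ 2 / ε' ^ 2 * ‖v‖ ^ 2 := by
    intro m hm
    have hexp : inner ℂ (f m) v = ∑ i, b i * inner ℂ (f m) (w (emb i)) := by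
      rw [hv, inner_sum]
      exact Finset.sum_congr rfl fun i _ => inner_smul_right _ _ _
    rcases lt_or_ge m n with hmn | hmn
    -- exact orthogonality, by the choice of `b`
    · rw [hexp, hb ⟨m, hmn⟩]
      simp; positivity
    · rw [div_mul_eq_mul_div, le_div_iff₀ (by positivity)]
      have hm' : (n : ℝ) ≤ m := by exact_mod_cast hmn
      calc ‖inner ℂ (f m) v‖ ^ 2 * ε' ^ 2
          ≤ ((∑ i, ‖b i‖ ^ 2) * ∑ i, ‖inner ℂ (f m) (w (emb i))‖ ^ 2) * ε' ^ 2 := by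
            rw [hexp]; gcongr; exact norm_sum_mul_sq_le _ _ _
        _ = ‖v‖ ^ 2 * ∑ i, (ε' * ‖inner ℂ (f m) (w (emb i))‖) ^ 2 := by
            rw [hvv]; simp only [mul_pow, ← Finset.mul_sum]; ring
        _ ≤ ‖v‖ ^ 2 * ∑ i, ‖inner ℂ (w (emb i))
              (T (f m) - (((m : ℝ) + 1 / 2 : ℝ) : ℂ) • f m)‖ ^ 2 := by
            gcongr with i _
            rw [inner_eigenvector_residual hT (hw _), norm_inner_symm]
            gcongr
            have := hlam i
            rw [abs_sub_comm]
            exact le_trans (by linarith) (le_abs_self _)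
        _ ≤ ‖v‖ ^ 2 * ‖T (f m) - (((m : ℝ) + 1 / 2 : ℝ) : ℂ) • f m‖ ^ 2 := by
            gcongr
            exact hon.sum_inner_products_le (s := Finset.univ) _
        _ ≤ ε ^ 2 * ‖v‖ ^ 2 := by
            rw [mul_comm]
            gcongr
            exact hres m hm
  obtain ⟨p, hp1, hp2, hp3⟩ := projection_small f v hgram hfv
  have hpκ : ‖p‖ ^ 2 ≤ κ * ‖v‖ ^ 2 := by
    refine hp1.trans ?_
    have : 4 * ((M : ℝ) + 1) * (ε ^ 2 / ε' ^ 2) ≤ κ := by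
      rw [← mul_div_assoc, div_le_iff₀ (by positivity)]; exact hκ
    calc _ = 4 * ((M : ℝ) + 1) * (ε ^ 2 / ε' ^ 2) * ‖v‖ ^ 2 := by ring
      _ ≤ _ := by gcongr
  have h1 := hΛ (v - p) hp3
  -- parallelogram law for the nonnegative energy form
  have h2 : (inner ℂ (v - p) (T (v - p))).re ≤
      2 * (inner ℂ v (T v)).re + 2 * (inner ℂ p (T p)).re := by
    have h3 := hpos (v + p)
    have h4 : (inner ℂ (v - p) (T (v - p))).re + (inner ℂ (v + p) (T (v + p))).re =
        2 * (inner ℂ v (T v)).re + 2 * (inner ℂ p (T p)).re := by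
      simp only [map_sub, map_add, inner_sub_left, inner_sub_right, inner_add_left,
        inner_add_right, Complex.add_re, Complex.sub_re]
      ring
    linarith
  have h3 := hB p
  have h4 : B * ‖p‖ ^ 2 ≤ B * (κ * ‖v‖ ^ 2) := by gcongr
  have h5 : Λ * ((1 - κ) * ‖v‖ ^ 2) ≤ Λ * ‖v - p‖ ^ 2 := by
    gcongr; rw [hp2]; linarith
  have h6 : (2 * (n : ℝ) + 1 + 2 * B * κ) * ‖v‖ ^ 2 ≤ Λ * (1 - κ) * ‖v‖ ^ 2 := by gcongr
  have h7 : lam ⟨n, hn⟩ * ‖v‖ ^ 2 < (n + 1 / 2) * ‖v‖ ^ 2 := by gcongr; linarith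
  nlinarith
end Abstract

/-! ### The grid and the discrete Fourier transform -/

/-- The grid spacing `h = √(2π/N)`. -/
def gridStep (N : ℕ) : ℝ := Real.sqrt (2 * Real.pi / N)

theorem gridStep_pos {N : ℕ} (hN : 0 < N) : 0 < gridStep N := by
  unfold gridStep; positivity

theorem gridStep_sq (N : ℕ) : gridStep N ^ 2 = 2 * Real.pi / N :=
  Real.sq_sqrt (by positivity)

theorem gridStep_sq_mul {N : ℕ} (hN : 0 < N) : gridStep N ^ 2 * N = 2 * Real.pi := by
  rw [gridStep_sq]; field_simp

theorem gridPt_eq (N : ℕ) (i : Fin N) :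
    gridPt N i = (((i : ℤ) - (N : ℤ) / 2 : ℤ) : ℝ) * gridStep N := rfl

theorem gridPt_eq' {N : ℕ} (hN : Even N) (i : Fin N) :
    gridPt N i = ((i : ℕ) - (N : ℝ) / 2) * gridStep N := by
  obtain ⟨m, rfl⟩ := hN
  rw [gridPt_eq]
  have : ((m + m : ℕ) : ℤ) / 2 = m := by push_cast; omega
  rw [this]; push_cast; ring

theorem abs_gridPt_le {N : ℕ} (hN : Even N) (i : Fin N) :
    |gridPt N i| ≤ N / 2 * gridStep N := by
  rw [gridPt_eq' hN, abs_mul, abs_of_nonneg (a := gridStep N) (Real.sqrt_nonneg _)]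
  gcongr
  · exact Real.sqrt_nonneg _
  have : ((i : ℕ) : ℝ) < N := by exact_mod_cast i.2
  have h0 : (0 : ℝ) ≤ ((i : ℕ) : ℝ) := by positivity
  rw [abs_le]; constructor <;> linarith

theorem gridPt_sq_le {N : ℕ} (hN : Even N) (hN0 : 0 < N) (i : Fin N) :
    gridPt N i ^ 2 ≤ 2 * N := by
  have h := abs_gridPt_le hN i
  have h2 : gridPt N i ^ 2 ≤ (N / 2 * gridStep N) ^ 2 := by
    rw [← sq_abs]; gcongr
  have h3 := gridStep_sq_mul hN0
  have h4 : (N / 2 * gridStep N) ^ 2 = N / 4 * (gridStep N ^ 2 * N) := by ring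
  rw [h4, h3] at h2
  have := Real.pi_lt_d2
  have hN' : (0 : ℝ) < N := by exact_mod_cast hN0
  nlinarith

theorem abs_gridPt_le_sqrt {N : ℕ} (hN : Even N) (hN0 : 0 < N) (i : Fin N) :
    |gridPt N i| ≤ Real.sqrt (2 * N) := by
  rw [← Real.sqrt_sq_eq_abs]; exact Real.sqrt_le_sqrt (gridPt_sq_le hN hN0 i)

theorem Fcd_apply {N : ℕ} (j k : Fin N) :
    Fcd N j k = ((1 / Real.sqrt N : ℝ) : ℂ) *
      Complex.exp (I * ((gridPt N j * gridPt N k : ℝ) : ℂ)) := by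
  unfold Fcd
  congr 2
  have h : gridPt N j * gridPt N k = (((j : ℤ) - (N : ℤ) / 2 : ℤ) : ℝ) *
      (((k : ℤ) - (N : ℤ) / 2 : ℤ) : ℝ) * (2 * Real.pi / N) := by
    rw [← gridStep_sq, gridPt_eq, gridPt_eq]; ring
  rw [h]
  push_cast
  ring

/-- Orthogonality of the characters of `ℤ/N`, evaluated on the centered grid. -/
theorem Fcd_conjTranspose_mul {N : ℕ} (hN : 0 < N) : (Fcd N)ᴴ * Fcd N = 1 := by
  ext j k
  have hN' : (N : ℂ) ≠ 0 := by exact_mod_cast hN.ne'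
  set ζ : ℂ := Complex.exp (2 * Real.pi * I * (((k : ℕ) : ℂ) - ((j : ℕ) : ℂ)) / N) with hζ
  have hterm : ∀ l : Fin N, (Fcd N)ᴴ j l * Fcd N l k =
      (1 / N) * (Complex.exp (2 * Real.pi * I * (((k : ℕ) : ℂ) - ((j : ℕ) : ℂ)) / N *
        (-(((N : ℤ) / 2 : ℤ) : ℂ))) * ζ ^ (l : ℕ)) := by
    intro l
    rw [Matrix.conjTranspose_apply, hζ, ← Complex.exp_nat_mul, ← Complex.exp_add]
    unfold Fcd
    rw [star_mul', Complex.star_def, ← Complex.exp_conj, Complex.conj_ofReal]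
    rw [mul_mul_mul_comm, ← Complex.exp_add, ← Complex.ofReal_mul]
    have h1 : (1 / Real.sqrt N * (1 / Real.sqrt N) : ℝ) = 1 / N := by
      rw [div_mul_div_comm, one_mul, Real.mul_self_sqrt (by positivity)]
    rw [h1]
    congr 2
    · push_cast; rfl
    simp only [map_div₀, map_mul, Complex.conj_I, Complex.conj_ofReal, map_ofNat, map_intCast,
      map_natCast]
    push_cast
    ring
  rw [Matrix.mul_apply, Finset.sum_congr rfl fun l _ => hterm l, ← Finset.mul_sum,
    ← Finset.mul_sum, ← Finset.sum_range (fun l => ζ ^ l)]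
  by_cases hjk : j = k
  · subst hjk
    have : ζ = 1 := by simp [hζ]
    rw [this]
    simp [hN']
  · rw [Matrix.one_apply_ne hjk]
    have hne : ζ ≠ 1 := by
      intro h
      rw [hζ, Complex.exp_eq_one_iff] at h
      obtain ⟨n, hn⟩ := h
      have h2 : (((k : ℕ) : ℂ) - ((j : ℕ) : ℂ)) = n * N := by
        have : (2 * (Real.pi : ℂ) * I) ≠ 0 := Complex.two_pi_I_ne_zero
        field_simp at hn
        apply mul_left_cancel₀ this
        linear_combination (2 * (Real.pi : ℂ) * I) * hn
      have h3 : ((k : ℕ) : ℤ) - ((j : ℕ) : ℤ) = n * N := by exact_mod_cast h2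
      have hk := k.2
      have hj := j.2
      have hn0 : n = 0 := by
        by_contra hn0
        rcases lt_or_gt_of_ne hn0 with h | h
        · nlinarith
        · nlinarith
      rw [hn0] at h3
      apply hjk; ext; omega
    have hpow : ζ ^ N = 1 := by
      rw [hζ, ← Complex.exp_nat_mul, Complex.exp_eq_one_iff]
      refine ⟨(k : ℕ) - (j : ℕ), ?_⟩
      push_cast; field_simp
    have hg := mul_neg_geom_sum ζ N
    rw [hpow, sub_self] at hg
    rcases mul_eq_zero.1 hg with h | h
    · exact absurd (sub_eq_zero.1 h).symm hne
    · rw [h]; simp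

theorem Fcd_inv {N : ℕ} (hN : 0 < N) : (Fcd N)⁻¹ = (Fcd N)ᴴ :=
  Matrix.inv_eq_left_inv (Fcd_conjTranspose_mul hN)

theorem Fcd_mul_conjTranspose {N : ℕ} (hN : 0 < N) : Fcd N * (Fcd N)ᴴ = 1 :=
  mul_eq_one_comm.1 (Fcd_conjTranspose_mul hN)

theorem Hd_eq {N : ℕ} (hN : 0 < N) :
    Hd N = (2 : ℂ)⁻¹ • (xd N ^ 2 + (Fcd N)ᴴ * xd N ^ 2 * Fcd N) := by
  unfold Hd pd
  rw [Fcd_inv hN, sq ((Fcd N)ᴴ * xd N * Fcd N)]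
  have : (Fcd N)ᴴ * xd N * Fcd N * ((Fcd N)ᴴ * xd N * Fcd N) =
      (Fcd N)ᴴ * xd N * (Fcd N * (Fcd N)ᴴ) * (xd N * Fcd N) := by simp only [Matrix.mul_assoc]
  rw [this, Fcd_mul_conjTranspose hN, Matrix.mul_one, sq (xd N)]
  simp only [Matrix.mul_assoc]

theorem xd_sq_mulVec (N : ℕ) (v : Fin N → ℂ) (i : Fin N) :
    (xd N ^ 2 *ᵥ v) i = ((gridPt N i ^ 2 : ℝ) : ℂ) * v i := by
  unfold xd
  rw [Matrix.diagonal_pow, Matrix.mulVec_diagonal]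
  simp

theorem Fcd_mulVec_Hd {N : ℕ} (hN : 0 < N) (v : Fin N → ℂ) :
    Fcd N *ᵥ (Hd N *ᵥ v) =
      (2 : ℂ)⁻¹ • (Fcd N *ᵥ (xd N ^ 2 *ᵥ v) + xd N ^ 2 *ᵥ (Fcd N *ᵥ v)) := by
  rw [Hd_eq hN]
  have h : Fcd N *ᵥ (((Fcd N)ᴴ * xd N ^ 2 * Fcd N) *ᵥ v) = xd N ^ 2 *ᵥ (Fcd N *ᵥ v) := by
    rw [Matrix.mulVec_mulVec, Matrix.mulVec_mulVec, ← Matrix.mul_assoc, ← Matrix.mul_assoc,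
      Fcd_mul_conjTranspose hN, Matrix.one_mul]
  rw [Matrix.smul_mulVec, Matrix.add_mulVec, Matrix.mulVec_smul, Matrix.mulVec_add, h]

theorem star_dotProduct_self {N : ℕ} (v : Fin N → ℂ) :
    star v ⬝ᵥ v = ((∑ i, ‖v i‖ ^ 2 : ℝ) : ℂ) := by
  simp only [dotProduct, Pi.star_apply, Complex.star_def]
  push_cast
  refine Finset.sum_congr rfl fun i _ => ?_
  rw [mul_comm, Complex.mul_conj, Complex.normSq_eq_norm_sq]; push_cast; rfl

theorem Fcd_norm_sq {N : ℕ} (hN : 0 < N) (v : Fin N → ℂ) :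
    ∑ i, ‖(Fcd N *ᵥ v) i‖ ^ 2 = ∑ i, ‖v i‖ ^ 2 := by
  have h : star (Fcd N *ᵥ v) ⬝ᵥ (Fcd N *ᵥ v) = star v ⬝ᵥ v := by
    rw [Matrix.star_mulVec, ← Matrix.dotProduct_mulVec, Matrix.mulVec_mulVec,
      Fcd_conjTranspose_mul hN, Matrix.one_mulVec]
  rw [star_dotProduct_self, star_dotProduct_self] at h
  exact_mod_cast h

/-- The energy form: potential energy on the grid plus kinetic energy on the Fourier side. -/
theorem Hd_form {N : ℕ} (hN : 0 < N) (v : Fin N → ℂ) :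
    star v ⬝ᵥ (Hd N *ᵥ v) = (((∑ i, gridPt N i ^ 2 * ‖v i‖ ^ 2 +
      ∑ i, gridPt N i ^ 2 * ‖(Fcd N *ᵥ v) i‖ ^ 2) / 2 : ℝ) : ℂ) := by
  have key : ∀ u : Fin N → ℂ, star u ⬝ᵥ (xd N ^ 2 *ᵥ u) =
      ((∑ i, gridPt N i ^ 2 * ‖u i‖ ^ 2 : ℝ) : ℂ) := by
    intro u
    simp only [dotProduct, Pi.star_apply, Complex.star_def, xd_sq_mulVec]
    push_cast
    refine Finset.sum_congr rfl fun i _ => ?_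
    rw [mul_left_comm, mul_comm ((starRingEnd ℂ) _), Complex.mul_conj,
      Complex.normSq_eq_norm_sq]; push_cast; rfl
  have h2 : star v ⬝ᵥ (((Fcd N)ᴴ * xd N ^ 2 * Fcd N) *ᵥ v) =
      star (Fcd N *ᵥ v) ⬝ᵥ (xd N ^ 2 *ᵥ (Fcd N *ᵥ v)) := by
    rw [Matrix.star_mulVec, ← Matrix.dotProduct_mulVec]
    simp only [Matrix.mulVec_mulVec, Matrix.mul_assoc]
  rw [Hd_eq hN, Matrix.smul_mulVec, Matrix.add_mulVec, dotProduct_smul, dotProduct_add, h2,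
    key, key]
  push_cast
  simp only [smul_eq_mul]
  ring

/-- The cyclic successor of a grid point is the next grid point, or wraps around from the right end
`(N/2 - 1) h` to the left end `-(N/2) h` of the grid. -/
theorem gridPt_finRotate_cases {N : ℕ} (hN : Even N) (k : Fin N) :
    gridPt N (finRotate N k) = gridPt N k + gridStep N ∨
      (gridPt N (finRotate N k) = gridPt N k + gridStep N - N * gridStep N ∧
        gridPt N k + gridStep N = N / 2 * gridStep N) := by
  obtain ⟨n, rfl⟩ : ∃ n, N = n + 1 := ⟨N - 1, by have := k.2; omega⟩
  rcases eq_or_ne k (Fin.last n) with rfl | hk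
  · right
    rw [finRotate_last, gridPt_eq' hN, gridPt_eq' hN]
    simp only [Fin.val_zero, Fin.val_last]
    push_cast
    constructor <;> ring
  · left
    rw [gridPt_eq' hN, gridPt_eq' hN, coe_finRotate_of_ne_last hk]
    push_cast; ring

/-- Since the grid starts at `-(N/2) h`, the wrap-around is invisible after squaring: `(N/2) h` and
`-(N/2) h` have the same square. -/
theorem gridPt_finRotate_sq {N : ℕ} (hN : Even N) (k : Fin N) :
    gridPt N (finRotate N k) ^ 2 = (gridPt N k + gridStep N) ^ 2 := by
  rcases gridPt_finRotate_cases hN k with h | ⟨h1, h2⟩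
  · rw [h]
  · rw [h1, h2]; ring

theorem exp_gridPt_finRotate {N : ℕ} (hN : Even N) (hN0 : 0 < N) (l k : Fin N) :
    Complex.exp (I * ((gridPt N l * gridPt N (finRotate N k) : ℝ) : ℂ)) =
      Complex.exp (I * ((gridStep N * gridPt N l : ℝ) : ℂ)) *
        Complex.exp (I * ((gridPt N l * gridPt N k : ℝ) : ℂ)) := by
  rw [← Complex.exp_add]
  rcases gridPt_finRotate_cases hN k with h | ⟨h, -⟩
  · rw [h]; congr 1; push_cast; ring
  · rw [h, Complex.exp_eq_exp_iff_exists_int]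
    refine ⟨-((l : ℤ) - (N : ℤ) / 2), ?_⟩
    have h1 : gridPt N l * (N * gridStep N) =
        (((l : ℤ) - (N : ℤ) / 2 : ℤ) : ℝ) * (2 * Real.pi) := by
      rw [← gridStep_sq_mul hN0, gridPt_eq]; ring
    have h2 : ((gridPt N l * (N * gridStep N) : ℝ) : ℂ) =
      (((((l : ℤ) - (N : ℤ) / 2 : ℤ) : ℝ) * (2 * Real.pi) : ℝ) : ℂ) := by rw [h1]
    push_cast at h2 ⊢
    linear_combination (-I) * h2

/-- The cyclic shift becomes multiplication by a phase on the Fourier side. -/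
theorem Fcd_shift {N : ℕ} (hN : Even N) (hN0 : 0 < N) (v : Fin N → ℂ) (l : Fin N) :
    (Fcd N *ᵥ v) l = Complex.exp (I * ((gridStep N * gridPt N l : ℝ) : ℂ)) *
      (Fcd N *ᵥ fun k => v (finRotate N k)) l := by
  simp only [Matrix.mulVec, dotProduct]
  rw [← Equiv.sum_comp (finRotate N), Finset.mul_sum]
  refine Finset.sum_congr rfl fun k _ => ?_
  rw [Fcd_apply, Fcd_apply, exp_gridPt_finRotate hN hN0]
  ring

/-- Parseval for the cyclic difference quotient. -/
theorem shift_sub_norm_sq {N : ℕ} (hN : Even N) (hN0 : 0 < N) (v : Fin N → ℂ) :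
    ∑ k, ‖v (finRotate N k) - v k‖ ^ 2 =
      ∑ l, ‖Complex.exp (I * ((gridStep N * gridPt N l : ℝ) : ℂ)) - 1‖ ^ 2 *
        ‖(Fcd N *ᵥ v) l‖ ^ 2 := by
  rw [← Fcd_norm_sq hN0 fun k => v (finRotate N k) - v k]
  refine Finset.sum_congr rfl fun l _ => ?_
  have h1 : (Fcd N *ᵥ fun k => v (finRotate N k) - v k) l =
      (Fcd N *ᵥ fun k => v (finRotate N k)) l - (Fcd N *ᵥ v) l := by
    have : (fun k => v (finRotate N k) - v k) = (fun k => v (finRotate N k)) - v := rfl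
    rw [this, Matrix.mulVec_sub, Pi.sub_apply]
  have h2 := Fcd_shift hN hN0 v l
  set e := Complex.exp (I * ((gridStep N * gridPt N l : ℝ) : ℂ)) with he
  have hen : ‖e‖ = 1 := by rw [he, mul_comm]; exact Complex.norm_exp_ofReal_mul_I _
  rw [h1, h2, norm_mul, hen, one_mul, ← mul_pow, ← norm_mul]
  have : (Fcd N *ᵥ fun k => v (finRotate N k)) l -
      e * (Fcd N *ᵥ fun k => v (finRotate N k)) l =
      -((e - 1) * (Fcd N *ᵥ fun k => v (finRotate N k)) l) := by ring
  rw [this, norm_neg]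

/-- The phase difference is comparable to the momentum, because `|h p| ≤ π` on the whole grid and
`|e^{it} - 1| = 2 |sin (t/2)|`. -/
theorem norm_phase_sub_one_bounds {N : ℕ} (hN : Even N) (hN0 : 0 < N) (l : Fin N) :
    ‖Complex.exp (I * ((gridStep N * gridPt N l : ℝ) : ℂ)) - 1‖ ^ 2 ≤
      gridStep N ^ 2 * gridPt N l ^ 2 ∧
    4 / Real.pi ^ 2 * (gridStep N ^ 2 * gridPt N l ^ 2) ≤
      ‖Complex.exp (I * ((gridStep N * gridPt N l : ℝ) : ℂ)) - 1‖ ^ 2 := by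
  have hpi := Real.pi_pos
  set t := gridStep N * gridPt N l with ht
  have htpi : |t| ≤ Real.pi := by
    rw [ht, abs_mul, abs_of_pos (gridStep_pos hN0)]
    calc gridStep N * |gridPt N l| ≤ gridStep N * (N / 2 * gridStep N) := by
          gcongr
          · exact (gridStep_pos hN0).le
          · exact abs_gridPt_le hN l
      _ = gridStep N ^ 2 * N / 2 := by ring
      _ = Real.pi := by rw [gridStep_sq_mul hN0]; ring
  have hsq : gridStep N ^ 2 * gridPt N l ^ 2 = t ^ 2 := by rw [ht, mul_pow]
  rw [hsq]
  constructor
  · rw [← sq_abs t, ← Real.norm_eq_abs]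
    gcongr
    exact Real.norm_exp_I_mul_ofReal_sub_one_le
  · rw [Complex.norm_exp_I_mul_ofReal_sub_one, Real.norm_eq_abs, sq_abs, mul_pow 2,
      ← sq_abs (Real.sin _), ← sq_abs t]
    have h1 : 2 / Real.pi * (|t| / 2) ≤ Real.sin (|t| / 2) :=
      Real.mul_le_sin (by positivity) (by linarith)
    have h2 : Real.sin (|t| / 2) ≤ |Real.sin (t / 2)| := by
      rcases abs_cases t with ⟨h, _⟩ | ⟨h, _⟩ <;> rw [h]
      · exact le_abs_self _
      · rw [neg_div, Real.sin_neg]; exact neg_le_abs _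
    have h3 : (2 / Real.pi * (|t| / 2)) ^ 2 ≤ |Real.sin (t / 2)| ^ 2 := by
      gcongr; exact h1.trans h2
    calc _ = 2 ^ 2 * (2 / Real.pi * (|t| / 2)) ^ 2 := by field_simp; ring
      _ ≤ _ := by gcongr

/-! ### Sampled Hermite states and the Poisson cutoff -/

theorem derivative_hermite_succ (n : ℕ) :
    Polynomial.derivative (Polynomial.hermite (n + 1)) = (n + 1) * Polynomial.hermite n := by
  induction n with
  | zero => simp
  | succ n ih =>
    rw [Polynomial.hermite_succ (n + 1), Polynomial.derivative_sub, Polynomial.derivative_mul,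
      ih, Polynomial.derivative_X, Polynomial.hermite_succ n]
    simp only [Polynomial.derivative_mul, Polynomial.derivative_add, Polynomial.derivative_natCast,
      Polynomial.derivative_one]
    push_cast
    ring

theorem hermite_three_term (n : ℕ) :
    Polynomial.X * Polynomial.hermite n =
      Polynomial.hermite (n + 1) + (n : Polynomial ℤ) * Polynomial.hermite (n - 1) := by
  cases n with
  | zero => simp
  | succ n =>
    rw [Polynomial.hermite_succ (n + 1), derivative_hermite_succ]
    simp

/-- The normalized Hermite function of degree `n` sampled on the grid, up to a factor that does
not depend on `n`, written with the probabilists' Hermite polynomials. -/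
def hst (N n : ℕ) : Fin N → ℂ := fun i =>
  ((Polynomial.aeval (Real.sqrt 2 * gridPt N i) (Polynomial.hermite n) / Real.sqrt n.factorial *
    Real.exp (-gridPt N i ^ 2 / 2) : ℝ) : ℂ)

theorem gridPt_mul_hst (N n : ℕ) (i : Fin N) :
    ((Real.sqrt 2 * gridPt N i : ℝ) : ℂ) * hst N n i =
      (Real.sqrt (n + 1) : ℂ) * hst N (n + 1) i + (Real.sqrt n : ℂ) * hst N (n - 1) i := by
  unfold hst
  have h := congrArg (Polynomial.aeval (Real.sqrt 2 * gridPt N i)) (hermite_three_term n)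
  simp only [map_mul, map_add, Polynomial.aeval_X, map_natCast] at h
  have hf : Real.sqrt ((n + 1).factorial) = Real.sqrt (n + 1) * Real.sqrt n.factorial := by
    rw [← Real.sqrt_mul (by positivity), Nat.factorial_succ]; push_cast; rfl
  have hp1 : 0 < Real.sqrt (n.factorial) := Real.sqrt_pos.2 (by positivity)
  have hp2 : 0 < Real.sqrt ((n : ℝ) + 1) := Real.sqrt_pos.2 (by positivity)
  rw [← ofReal_mul, ← ofReal_mul, ← ofReal_mul, ← ofReal_add, hf]
  congr 1
  have h2 : (n : ℝ) * (1 / Real.sqrt n.factorial) =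
      Real.sqrt n * (1 / Real.sqrt (n - 1).factorial) := by
    cases n with
    | zero => simp
    | succ m =>
      have hf : Real.sqrt ((m + 1).factorial) = Real.sqrt (m + 1) * Real.sqrt m.factorial := by
        rw [← Real.sqrt_mul (by positivity), Nat.factorial_succ]; push_cast; rfl
      have hp1 : 0 < Real.sqrt (m.factorial) := Real.sqrt_pos.2 (by positivity)
      have hp2 : 0 < Real.sqrt ((m : ℝ) + 1) := Real.sqrt_pos.2 (by positivity)
      rw [hf]
      push_cast
      field_simp
      rw [Real.sq_sqrt (by positivity)]
  set A := (Polynomial.aeval (Real.sqrt 2 * gridPt N i)) (Polynomial.hermite n)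
  set B := (Polynomial.aeval (Real.sqrt 2 * gridPt N i)) (Polynomial.hermite (n + 1))
  set C := (Polynomial.aeval (Real.sqrt 2 * gridPt N i)) (Polynomial.hermite (n - 1))
  set e := Real.exp (-gridPt N i ^ 2 / 2)
  have h3 : Real.sqrt (n + 1) * (B / (Real.sqrt (n + 1) * Real.sqrt n.factorial) * e) =
      B * (1 / Real.sqrt n.factorial) * e := by field_simp
  rw [h3]
  linear_combination (1 / Real.sqrt n.factorial * e) * h + C * e * h2

/-- Orthogonality to the first Hermite states is orthogonality to all low monomials times the
Gaussian. -/
theorem moments_zero {N M : ℕ} {v : Fin N → ℂ} (hv : ∀ m ≤ M, ∑ i, hst N m i * v i = 0) :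
    ∀ k m, k + m ≤ M → ∑ i, (gridPt N i : ℂ) ^ k * (hst N m i * v i) = 0 := by
  intro k
  induction k with
  | zero => intro m hm; simpa using hv m (by omega)
  | succ k ih =>
    intro m hm
    have h1 := ih (m + 1) (by omega)
    have h2 := ih (m - 1) (by omega)
    have h3 : (Real.sqrt 2 : ℂ) * ∑ i, (gridPt N i : ℂ) ^ (k + 1) * (hst N m i * v i) =
        (Real.sqrt (m + 1) : ℂ) * ∑ i, (gridPt N i : ℂ) ^ k * (hst N (m + 1) i * v i) +
        (Real.sqrt m : ℂ) * ∑ i, (gridPt N i : ℂ) ^ k * (hst N (m - 1) i * v i) := by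
      simp only [Finset.mul_sum, ← Finset.sum_add_distrib]
      refine Finset.sum_congr rfl fun i _ => ?_
      have := gridPt_mul_hst N m i
      push_cast at this
      linear_combination ((gridPt N i : ℂ) ^ k * v i) * this
    rw [h1, h2, mul_zero, mul_zero, add_zero] at h3
    have h4 : (Real.sqrt 2 : ℂ) ≠ 0 := by
      exact_mod_cast (Real.sqrt_pos.2 two_pos).ne'
    exact (mul_eq_zero.1 h3).resolve_left h4

/-- The smooth cutoff `φ_K(s) = e^{-s} ∑_{k ≤ K} s^k / k!`, the probability that a Poisson variable
of mean `s` is at most `K`. -/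
def cutoff (K : ℕ) (s : ℝ) : ℝ :=
  Real.exp (-s) * ∑ k ∈ Finset.range (K + 1), s ^ k / k.factorial

theorem cutoff_nonneg (K : ℕ) {s : ℝ} (hs : 0 ≤ s) : 0 ≤ cutoff K s := by
  unfold cutoff; positivity

theorem cutoff_le_one (K : ℕ) {s : ℝ} (hs : 0 ≤ s) : cutoff K s ≤ 1 := by
  unfold cutoff
  have := Real.sum_le_exp_of_nonneg hs (K + 1)
  calc _ ≤ Real.exp (-s) * Real.exp s := by gcongr
    _ = 1 := by rw [← Real.exp_add]; simp

theorem hasDerivAt_expSum (K : ℕ) (s : ℝ) :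
    HasDerivAt (fun s : ℝ => ∑ k ∈ Finset.range (K + 1), s ^ k / k.factorial)
      (∑ k ∈ Finset.range K, s ^ k / k.factorial) s := by
  induction K with
  | zero => simpa using hasDerivAt_const s (1 : ℝ)
  | succ K ih =>
    simp only [Finset.sum_range_succ _ (K + 1)]
    rw [Finset.sum_range_succ]
    refine ih.add ?_
    have h := (hasDerivAt_pow (K + 1) s).div_const ((K + 1).factorial : ℝ)
    refine h.congr_deriv ?_
    rw [Nat.factorial_succ]
    push_cast
    have : (K.factorial : ℝ) ≠ 0 := by positivity
    have : ((K : ℝ) + 1) ≠ 0 := by positivity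
    field_simp

theorem hasDerivAt_cutoff (K : ℕ) (s : ℝ) :
    HasDerivAt (cutoff K) (-(Real.exp (-s) * (s ^ K / K.factorial))) s := by
  have h1 : HasDerivAt (fun s : ℝ => Real.exp (-s)) (-Real.exp (-s)) s := by
    simpa using (hasDerivAt_neg s).exp
  refine (h1.mul (hasDerivAt_expSum K s)).congr_deriv ?_
  rw [Finset.sum_range_succ]; ring

/-- The weight is largest at `s = K`, where Stirling's lower bound on `K!` applies. -/
theorem poisson_weight_le {K : ℕ} (hK : 0 < K) {s : ℝ} (hs : 0 ≤ s) :
    Real.exp (-s) * (s ^ K / K.factorial) ≤ 1 / Real.sqrt K := by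
  have hK' : (0 : ℝ) < K := by exact_mod_cast hK
  have h1 := Stirling.le_factorial_stirling K
  have h2 : s ^ K * Real.exp (-s) ≤ (K / Real.exp 1) ^ K := by
    have : s / K * Real.exp 1 ≤ Real.exp (s / K) := by
      calc _ ≤ Real.exp (s / K - 1) * Real.exp 1 := by
            gcongr; linarith [Real.add_one_le_exp (s / K - 1)]
        _ = _ := by rw [← Real.exp_add]; simp
    have h3 : (s / K * Real.exp 1) ^ K ≤ Real.exp s := by
      calc _ ≤ Real.exp (s / K) ^ K := by gcongr
        _ = _ := by rw [← Real.exp_nat_mul]; congr 1; field_simp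
    rw [Real.exp_neg, ← div_eq_mul_inv, div_le_iff₀ (Real.exp_pos _)]
    calc s ^ K = (K / Real.exp 1) ^ K * (s / K * Real.exp 1) ^ K := by
          rw [← mul_pow]; congr 1; field_simp
      _ ≤ _ := by gcongr
  have h4 : Real.sqrt K ≤ Real.sqrt (2 * Real.pi * K) := by
    apply Real.sqrt_le_sqrt
    nlinarith [Real.pi_gt_three]
  have h5 : 0 < Real.sqrt K := Real.sqrt_pos.2 hK'
  have h6 : 0 < (K / Real.exp 1) ^ K := by positivity
  rw [le_div_iff₀ h5, ← mul_div_assoc, div_mul_eq_mul_div, div_le_one (by positivity)]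
  calc Real.exp (-s) * s ^ K * Real.sqrt K ≤ (K / Real.exp 1) ^ K * Real.sqrt (2 * Real.pi * K) := by
        rw [mul_comm (Real.exp (-s))]; gcongr
    _ ≤ _ := by rw [mul_comm]; exact h1

theorem cutoff_lipschitz {K : ℕ} (hK : 0 < K) {s t : ℝ} (hs : 0 ≤ s) (ht : 0 ≤ t) :
    |cutoff K s - cutoff K t| ≤ 1 / Real.sqrt K * |s - t| := by
  have := (convex_Ici (0 : ℝ)).norm_image_sub_le_of_norm_hasDerivWithin_le
    (f := cutoff K) (f' := fun s => -(Real.exp (-s) * (s ^ K / K.factorial)))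
    (C := 1 / Real.sqrt K) (x := t) (y := s)
    (fun x _ => (hasDerivAt_cutoff K x).hasDerivWithinAt)
    (fun x hx => by
      have hx' : (0 : ℝ) ≤ x := hx
      rw [norm_neg, Real.norm_eq_abs, abs_of_nonneg (by positivity)]
      exact poisson_weight_le hK hx') ht hs
  simpa [Real.norm_eq_abs] using this

/-- Markov's inequality for a Poisson variable of mean `s`, cleared of denominators. The derivative in
`s` of the right-hand side is at least the same expression for `K - 1`, whence the induction. -/
theorem mul_exp_le_expSum (K : ℕ) {s : ℝ} (hs : 0 ≤ s) :
    0 ≤ K * (∑ k ∈ Finset.range (K + 1), s ^ k / k.factorial) - (K - s) * Real.exp s := by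
  induction K generalizing s with
  | zero => simp; positivity
  | succ K ih =>
    set F : ℝ → ℝ := fun s => ((K + 1 : ℕ) : ℝ) *
      (∑ k ∈ Finset.range (K + 1 + 1), s ^ k / k.factorial) -
      (((K + 1 : ℕ) : ℝ) - s) * Real.exp s with hF
    have hd : ∀ x : ℝ, HasDerivAt F (((K + 1 : ℕ) : ℝ) *
      (∑ k ∈ Finset.range (K + 1), x ^ k / k.factorial) -
      (-1 * Real.exp x + (((K + 1 : ℕ) : ℝ) - x) * Real.exp x)) x := by
      intro x
      refine ((hasDerivAt_expSum (K + 1) x).const_mul _).sub ?_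
      have h1 : HasDerivAt (fun s : ℝ => ((K + 1 : ℕ) : ℝ) - s) (-1) x := by
        simpa using (hasDerivAt_id x).const_sub ((K + 1 : ℕ) : ℝ)
      exact h1.mul (Real.hasDerivAt_exp x)
    have hmono : MonotoneOn F (Set.Ici 0) := by
      refine monotoneOn_of_deriv_nonneg (convex_Ici 0)
        (fun x _ => (hd x).continuousAt.continuousWithinAt)
        (fun x _ => (hd x).differentiableAt.differentiableWithinAt) fun x hx => ?_
      rw [interior_Ici] at hx
      have hx0 : 0 ≤ x := le_of_lt hx
      rw [(hd x).deriv]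
      have h1 := ih hx0
      have h2 : 0 ≤ ∑ k ∈ Finset.range (K + 1), x ^ k / (k.factorial : ℝ) := by positivity
      push_cast
      linarith
    have h0 : F 0 = 0 := by
      simp [hF, Finset.sum_range_succ']
    have := hmono (Set.self_mem_Ici) hs hs
    rw [h0] at this
    exact this

theorem cutoff_ge {K : ℕ} (hK : 0 < K) {s : ℝ} (hs : 0 ≤ s) : 1 - s / K ≤ cutoff K s := by
  have hK' : (0 : ℝ) < K := by exact_mod_cast hK
  have h := mul_exp_le_expSum K hs
  unfold cutoff
  rw [Real.exp_neg, inv_mul_eq_div, le_div_iff₀ (Real.exp_pos _)]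
  have : (1 - s / K) = (K - s) / K := by field_simp
  rw [this, div_mul_eq_mul_div, div_le_iff₀ hK']
  linarith

theorem cutoff_sq_ge {K : ℕ} (hK : 0 < K) {s : ℝ} (hs : 0 ≤ s) :
    1 - 2 * s / K ≤ cutoff K s ^ 2 := by
  have h := cutoff_ge hK hs
  have h0 := cutoff_nonneg K hs
  rw [mul_div_assoc]
  rcases le_or_gt 0 (1 - s / K) with h1 | h1
  · nlinarith [sq_nonneg (s / K)]
  · nlinarith [sq_nonneg (cutoff K s)]

/-! ### Energy on the complement of the Hermite states -/

theorem hst_zero (N : ℕ) (i : Fin N) : hst N 0 i = (Real.exp (-gridPt N i ^ 2 / 2) : ℝ) := by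
  simp [hst]

/-- The cutoff at `s = x²/2` is a polynomial of degree `2 K` in `x` times the Gaussian `e^{-x²/2}`, so
cutting off a vector orthogonal to `4 K + 1` Hermite states leaves `2 K + 1` vanishing moments. -/
theorem cutoff_moments_zero {K N : ℕ} {v : Fin N → ℂ}
    (hv : ∀ m ≤ 4 * K, ∑ i, hst N m i * v i = 0) {k : ℕ} (hk : k ≤ 2 * K) :
    ∑ i, (gridPt N i : ℂ) ^ k * ((cutoff K (gridPt N i ^ 2 / 2) : ℂ) * v i) = 0 := by
  have h : ∀ i, (gridPt N i : ℂ) ^ k * ((cutoff K (gridPt N i ^ 2 / 2) : ℂ) * v i) =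
      ∑ j ∈ Finset.range (K + 1), (1 / (2 ^ j * j.factorial) : ℂ) *
        ((gridPt N i : ℂ) ^ (k + 2 * j) * (hst N 0 i * v i)) := by
    intro i
    rw [hst_zero, cutoff, neg_div]
    push_cast
    rw [Finset.mul_sum, Finset.sum_mul, Finset.mul_sum]
    refine Finset.sum_congr rfl fun j _ => ?_
    rw [div_pow, ← pow_mul]
    field_simp
    ring
  simp only [h]
  rw [Finset.sum_comm]
  refine Finset.sum_eq_zero fun j hj => ?_
  rw [← Finset.mul_sum, moments_zero hv (k + 2 * j) 0, mul_zero]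
  have := Finset.mem_range.1 hj
  omega

/-- The remainder is at most `2 |t|^K / K!`, and `K^K / K! ≤ e^K ≤ 4^K`. -/
theorem exp_sub_taylor_le {K : ℕ} {t : ℝ} (ht : |t| ≤ K / 16) :
    ‖Complex.exp (I * (t : ℂ)) - ∑ m ∈ Finset.range K, (I * (t : ℂ)) ^ m / m.factorial‖ ≤
      2 * (1 / 4) ^ K := by
  have hn : ‖I * (t : ℂ)‖ = |t| := by simp
  refine (Complex.exp_bound' (n := K) ?_).trans ?_
  · rw [hn, div_le_iff₀ (by positivity)]
    push_cast
    linarith [Nat.cast_nonneg (α := ℝ) K]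
  · rw [hn]
    have h1 : |t| ^ K ≤ (1 / 16) ^ K * (K : ℝ) ^ K := by
      rw [← mul_pow]; gcongr; linarith
    have h2 := Real.pow_div_factorial_le_exp (K : ℝ) (by positivity) K
    have h3 : Real.exp K ≤ 4 ^ K := by
      rw [← Real.exp_one_pow]
      gcongr
      linarith [Real.exp_one_lt_d9]
    calc |t| ^ K / K.factorial * 2 ≤ (1 / 16) ^ K * (K : ℝ) ^ K / K.factorial * 2 := by gcongr
      _ = (1 / 16) ^ K * ((K : ℝ) ^ K / K.factorial) * 2 := by ring
      _ ≤ (1 / 16) ^ K * 4 ^ K * 2 := by gcongr; exact h2.trans h3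
      _ = _ := by rw [← mul_pow]; norm_num; ring

/-- If all low moments of `u` vanish, its discrete Fourier transform is tiny at low frequencies. -/
theorem Fcd_small_of_moments {K N : ℕ} (hN0 : 0 < N) {u : Fin N → ℂ}
    (hu : ∀ k ≤ 2 * K, ∑ i, (gridPt N i : ℂ) ^ k * u i = 0) {l : Fin N}
    (hl : ∀ i, |gridPt N l * gridPt N i| ≤ K / 16) :
    ‖(Fcd N *ᵥ u) l‖ ^ 2 ≤ (2 * (1 / 4) ^ K) ^ 2 * ∑ i, ‖u i‖ ^ 2 := by
  have h1 : (Fcd N *ᵥ u) l = ((1 / Real.sqrt N : ℝ) : ℂ) *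
      ∑ i, (Complex.exp (I * ((gridPt N l * gridPt N i : ℝ) : ℂ)) -
        ∑ m ∈ Finset.range K, (I * ((gridPt N l * gridPt N i : ℝ) : ℂ)) ^ m / m.factorial) * u i := by
    simp only [sub_mul, Finset.sum_sub_distrib]
    have : ∑ i, (∑ m ∈ Finset.range K,
        (I * ((gridPt N l * gridPt N i : ℝ) : ℂ)) ^ m / m.factorial) * u i = 0 := by
      simp only [Finset.sum_mul]
      rw [Finset.sum_comm]
      refine Finset.sum_eq_zero fun m hm => ?_
      have hm' := Finset.mem_range.1 hm
      have h := hu m (by omega)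
      calc _ = (I * gridPt N l) ^ m / m.factorial * ∑ i, (gridPt N i : ℂ) ^ m * u i := by
            rw [Finset.mul_sum]
            refine Finset.sum_congr rfl fun i _ => ?_
            push_cast
            rw [← mul_assoc I, mul_pow (I * (gridPt N l : ℂ))]
            ring
        _ = 0 := by rw [h, mul_zero]
    rw [this, sub_zero, Finset.mul_sum]
    simp only [Matrix.mulVec, dotProduct, Fcd_apply, mul_assoc]
  have h2 : ‖(Fcd N *ᵥ u) l‖ ≤ 1 / Real.sqrt N * (2 * (1 / 4) ^ K * ∑ i, ‖u i‖) := by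
    rw [h1, norm_mul, Complex.norm_real, Real.norm_of_nonneg (by positivity)]
    gcongr
    rw [Finset.mul_sum]
    refine (norm_sum_le _ _).trans (Finset.sum_le_sum fun i _ => ?_)
    rw [norm_mul]
    gcongr
    exact exp_sub_taylor_le (hl i)
  have h3 : (∑ i, ‖u i‖) ^ 2 ≤ N * ∑ i, ‖u i‖ ^ 2 := by
    simpa using sq_sum_le_card_mul_sum_sq (s := Finset.univ) (f := fun i => ‖u i‖)
  have hN' : (0 : ℝ) < N := by exact_mod_cast hN0
  calc ‖(Fcd N *ᵥ u) l‖ ^ 2 ≤ (1 / Real.sqrt N * (2 * (1 / 4) ^ K * ∑ i, ‖u i‖)) ^ 2 := by gcongr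
    _ = 1 / N * ((2 * (1 / 4) ^ K) ^ 2 * (∑ i, ‖u i‖) ^ 2) := by
        rw [mul_pow, mul_pow, div_pow, Real.sq_sqrt hN'.le, one_pow]
    _ ≤ 1 / N * ((2 * (1 / 4) ^ K) ^ 2 * (N * ∑ i, ‖u i‖ ^ 2)) := by gcongr
    _ = _ := by field_simp

theorem pow_sixteen_ge {K : ℕ} (hK : 4 ≤ K) : 3200 * K ≤ 16 ^ K := by
  induction K, hK using Nat.le_induction with
  | base => norm_num
  | succ K hK ih => rw [pow_succ]; omega

set_option maxHeartbeats 800000 in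
/-- On vectors orthogonal to the first `4 K + 1` Hermite states the oscillator energy is at least of
order `N`. The smoothly cut off vector `u = g v` has vanishing low moments, hence no low frequencies,
hence large momentum; and the cutoff changes neither the mass nor the momentum of `v` by more than
the energy allows. -/
theorem crude_bound {K N : ℕ} (hK : 4 ≤ K) (hN : Even N) (h1 : 200 * K ≤ N) (h2 : N ≤ 400 * K)
    {v : Fin N → ℂ} (hv : ∀ m ≤ 4 * K, ∑ i, hst N m i * v i = 0) :
    (N / (12800 ^ 2 * 20) - 400 : ℝ) * ∑ i, ‖v i‖ ^ 2 ≤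
      (∑ i, gridPt N i ^ 2 * ‖v i‖ ^ 2 + ∑ i, gridPt N i ^ 2 * ‖(Fcd N *ᵥ v) i‖ ^ 2) / 2 := by
  have hN0 : 0 < N := by omega
  have hN' : (0 : ℝ) < N := by exact_mod_cast hN0
  have hK0 : 0 < K := by omega
  have hK' : (0 : ℝ) < K := by exact_mod_cast hK0
  have h1' : 200 * (K : ℝ) ≤ N := by exact_mod_cast h1
  have h2' : (N : ℝ) ≤ 400 * K := by exact_mod_cast h2
  set g : Fin N → ℝ := fun i => cutoff K (gridPt N i ^ 2 / 2) with hg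
  set u : Fin N → ℂ := fun i => (g i : ℂ) * v i with hu
  set h := gridStep N with hh
  have hpos : 0 < h := gridStep_pos hN0
  have hg0 : ∀ i, 0 ≤ g i := fun i => cutoff_nonneg K (by positivity)
  have hg1 : ∀ i, g i ≤ 1 := fun i => cutoff_le_one K (by positivity)
  set V := ∑ i, ‖v i‖ ^ 2 with hV
  set X := ∑ i, gridPt N i ^ 2 * ‖v i‖ ^ 2 with hX
  set P := ∑ i, gridPt N i ^ 2 * ‖(Fcd N *ᵥ v) i‖ ^ 2 with hP
  set U := ∑ i, ‖u i‖ ^ 2 with hU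
  set Q := ∑ i, gridPt N i ^ 2 * ‖(Fcd N *ᵥ u) i‖ ^ 2 with hQ
  have hV0 : 0 ≤ V := by positivity
  have hX0 : 0 ≤ X := by positivity
  have hnu : ∀ i, ‖u i‖ ^ 2 = g i ^ 2 * ‖v i‖ ^ 2 := fun i => by
    simp only [hu, norm_mul, Complex.norm_real, mul_pow, Real.norm_eq_abs, sq_abs]
  have hUV : U ≤ V := by
    refine Finset.sum_le_sum fun i _ => ?_
    rw [hnu]
    exact mul_le_of_le_one_left (by positivity) (pow_le_one₀ (hg0 i) (hg1 i))
  -- mass of the cut off vector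
  have hf : V - X / K ≤ U := by
    rw [hV, hX, hU, Finset.sum_div, ← Finset.sum_sub_distrib]
    refine Finset.sum_le_sum fun i _ => ?_
    rw [hnu]
    have := cutoff_sq_ge hK0 (s := gridPt N i ^ 2 / 2) (by positivity)
    calc _ = (1 - 2 * (gridPt N i ^ 2 / 2) / K) * ‖v i‖ ^ 2 := by ring
      _ ≤ _ := by gcongr
  -- the cut off vector has no low frequencies
  have ha : (N : ℝ) / 12800 ^ 2 * (U - V / 2) ≤ Q := by
    set δ : ℝ := (2 * (1 / 4) ^ K) ^ 2 with hδ
    have hδN : N * δ ≤ 1 / 2 := by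
      have h16 : 3200 * (K : ℝ) ≤ 16 ^ K := by exact_mod_cast pow_sixteen_ge hK
      have : δ = 4 / 16 ^ K := by
        rw [hδ, mul_pow, ← pow_mul, mul_comm K 2, pow_mul, one_div, inv_pow, inv_pow]; norm_num
        rfl
      rw [this, mul_div_assoc', div_le_iff₀ (by positivity)]
      linarith
    have hl : ∀ l, (N : ℝ) / 12800 ^ 2 * (‖(Fcd N *ᵥ u) l‖ ^ 2 - δ * U) ≤
        gridPt N l ^ 2 * ‖(Fcd N *ᵥ u) l‖ ^ 2 := by
      intro l
      have hU0 : 0 ≤ U := by positivity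
      have hδ0 : 0 ≤ δ := by positivity
      rcases le_or_gt (gridPt N l ^ 2) ((N : ℝ) / 12800 ^ 2) with hc | hc
      · have hsm := Fcd_small_of_moments (K := K) hN0 (u := u)
          (fun k hk => cutoff_moments_zero hv hk) (l := l) (fun i => by
            refine abs_le_of_sq_le_sq ?_ (by positivity)
            have := gridPt_sq_le hN hN0 i
            calc (gridPt N l * gridPt N i) ^ 2 = gridPt N l ^ 2 * gridPt N i ^ 2 := by ring
              _ ≤ (N : ℝ) / 12800 ^ 2 * (2 * N) := by gcongr
              _ = 2 * N ^ 2 / 12800 ^ 2 := by ring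
              _ ≤ 2 * (400 * K) ^ 2 / 12800 ^ 2 := by gcongr
              _ ≤ _ := by nlinarith [sq_nonneg (K : ℝ)])
        have : (N : ℝ) / 12800 ^ 2 * (‖(Fcd N *ᵥ u) l‖ ^ 2 - δ * U) ≤ 0 :=
          mul_nonpos_of_nonneg_of_nonpos (by positivity) (by linarith)
        exact this.trans (by positivity)
      · calc _ ≤ (N : ℝ) / 12800 ^ 2 * ‖(Fcd N *ᵥ u) l‖ ^ 2 := by
              gcongr; linarith [mul_nonneg hδ0 hU0]
          _ ≤ _ := by gcongr
    have hs := Finset.sum_le_sum fun l (_ : l ∈ Finset.univ) => hl l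
    rw [← Finset.mul_sum, Finset.sum_sub_distrib, Fcd_norm_sq hN0] at hs
    simp only [Finset.sum_const, Finset.card_univ, Fintype.card_fin, nsmul_eq_mul] at hs
    refine le_trans ?_ hs
    gcongr
    calc N * (δ * U) = N * δ * U := by ring
      _ ≤ 1 / 2 * V := by gcongr
      _ = _ := by ring
  -- momentum of the cut off vector
  have hgd : ∀ k, (g (finRotate N k) - g k) ^ 2 ≤ 800 * h ^ 2 := by
    intro k
    have hL := cutoff_lipschitz hK0 (s := gridPt N (finRotate N k) ^ 2 / 2)
      (t := gridPt N k ^ 2 / 2) (by positivity) (by positivity)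
    have hx1 := gridPt_sq_le hN hN0 k
    have hx2 := gridPt_sq_le hN hN0 (finRotate N k)
    have hr := gridPt_finRotate_sq hN k
    calc (g (finRotate N k) - g k) ^ 2 = |g (finRotate N k) - g k| ^ 2 := (sq_abs _).symm
      _ ≤ (1 / Real.sqrt K * |gridPt N (finRotate N k) ^ 2 / 2 - gridPt N k ^ 2 / 2|) ^ 2 := by
          gcongr
      _ = 1 / K * (h ^ 2 * (gridPt N k + (gridPt N k + h)) ^ 2 / 4) := by
          rw [mul_pow, div_pow, Real.sq_sqrt hK'.le, sq_abs, hr]; ring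
      _ ≤ 1 / K * (h ^ 2 * (8 * N) / 4) := by
          gcongr
          rw [hr] at hx2
          nlinarith [sq_nonneg (gridPt N k - (gridPt N k + h))]
      _ = h ^ 2 * (2 * N) / K := by ring
      _ ≤ _ := by
          rw [div_le_iff₀ hK']
          nlinarith [sq_nonneg h]
  have hb : 4 / Real.pi ^ 2 * h ^ 2 * Q ≤ ∑ k, ‖u (finRotate N k) - u k‖ ^ 2 := by
    rw [shift_sub_norm_sq hN hN0, hQ, Finset.mul_sum]
    refine Finset.sum_le_sum fun l _ => ?_
    calc _ = 4 / Real.pi ^ 2 * (h ^ 2 * gridPt N l ^ 2) * ‖(Fcd N *ᵥ u) l‖ ^ 2 := by ring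
      _ ≤ _ := by gcongr; exact (norm_phase_sub_one_bounds hN hN0 l).2
  have he : ∑ k, ‖v (finRotate N k) - v k‖ ^ 2 ≤ h ^ 2 * P := by
    rw [shift_sub_norm_sq hN hN0, hP, Finset.mul_sum]
    refine Finset.sum_le_sum fun l _ => ?_
    calc _ ≤ h ^ 2 * gridPt N l ^ 2 * ‖(Fcd N *ᵥ v) l‖ ^ 2 := by
          gcongr; exact (norm_phase_sub_one_bounds hN hN0 l).1
      _ = _ := by ring
  have hc : ∑ k, ‖u (finRotate N k) - u k‖ ^ 2 ≤ 2 * (h ^ 2 * P) + 1600 * h ^ 2 * V := by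
    calc _ ≤ ∑ k, (2 * ‖v (finRotate N k) - v k‖ ^ 2 + 1600 * h ^ 2 * ‖v k‖ ^ 2) := by
          refine Finset.sum_le_sum fun k _ => ?_
          have hid : u (finRotate N k) - u k = (g (finRotate N k) : ℂ) *
              (v (finRotate N k) - v k) + ((g (finRotate N k) - g k : ℝ) : ℂ) * v k := by
            simp only [hu]; push_cast; ring
          have hn : ‖u (finRotate N k) - u k‖ ≤ ‖v (finRotate N k) - v k‖ +
              |g (finRotate N k) - g k| * ‖v k‖ := by
            rw [hid]
            refine (norm_add_le _ _).trans ?_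
            rw [norm_mul, norm_mul, Complex.norm_real, Complex.norm_real, Real.norm_eq_abs,
              Real.norm_eq_abs, abs_of_nonneg (hg0 _)]
            gcongr
            exact mul_le_of_le_one_left (norm_nonneg _) (hg1 _)
          have h3 : (|g (finRotate N k) - g k| * ‖v k‖) ^ 2 ≤ 800 * h ^ 2 * ‖v k‖ ^ 2 := by
            rw [mul_pow, sq_abs]; gcongr; exact hgd k
          have h4 := pow_le_pow_left₀ (norm_nonneg _) hn 2
          nlinarith [sq_nonneg (‖v (finRotate N k) - v k‖ - |g (finRotate N k) - g k| * ‖v k‖)]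
      _ = 2 * (∑ k, ‖v (finRotate N k) - v k‖ ^ 2) + 1600 * h ^ 2 * V := by
          rw [Finset.sum_add_distrib, ← Finset.mul_sum, ← Finset.mul_sum]
      _ ≤ _ := by gcongr
  have hQb : Q ≤ 5 * P + 4000 * V := by
    have h3 := hb.trans hc
    have h4 : h ^ 2 * (4 / Real.pi ^ 2 * Q) ≤ h ^ 2 * (2 * P + 1600 * V) := by linarith
    have h5 := le_of_mul_le_mul_left h4 (by positivity)
    have hpi : Real.pi ^ 2 ≤ 10 := by nlinarith [Real.pi_lt_d2, Real.pi_pos]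
    have h6 : 4 / 10 ≤ 4 / Real.pi ^ 2 := by gcongr
    have hQ0 : 0 ≤ Q := by positivity
    nlinarith
  have h7 : (N : ℝ) / 12800 ^ 2 * (X / K) ≤ 5 * X := by
    rw [← mul_div_assoc, div_le_iff₀ hK']
    nlinarith [mul_nonneg hX0 (sub_nonneg.2 h2'), mul_nonneg hX0 hK'.le]
  have h8 : (N : ℝ) / 12800 ^ 2 * (V - X / K - V / 2) ≤ (N : ℝ) / 12800 ^ 2 * (U - V / 2) := by
    gcongr
  have h9 := h8.trans (ha.trans hQb)
  have h10 : (N / (12800 ^ 2 * 20) - 400 : ℝ) * V =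
      ((N : ℝ) / 12800 ^ 2 * V / 2) / 10 - 400 * V := by ring
  have h11 : (N : ℝ) / 12800 ^ 2 * (V - X / K - V / 2) =
      (N : ℝ) / 12800 ^ 2 * V / 2 - (N : ℝ) / 12800 ^ 2 * (X / K) := by ring
  rw [h10]
  rw [h11] at h9
  linarith

/-! ### Poisson summation for the generating function -/

/-- The generating function `exp(√2 x z - z²/2 - x²/2)` of the Hermite functions. -/
def genFn (z : ℂ) (x : ℝ) : ℂ :=
  Complex.exp ((Real.sqrt 2 * x : ℝ) * z - z ^ 2 / 2 + ((-x ^ 2 / 2 : ℝ) : ℂ))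

/-- The quadratic form in the exponent, with `√2 |x| r ≤ x²/4 + 2 r²`. -/
theorem norm_genFn_le {z : ℂ} {r : ℝ} (hz : ‖z‖ ≤ r) (x : ℝ) :
    ‖genFn z x‖ ≤ Real.exp (5 * r ^ 2 / 2 - x ^ 2 / 4) := by
  unfold genFn
  rw [Complex.norm_exp]
  gcongr
  have h1 : ((Real.sqrt 2 * x : ℝ) * z - z ^ 2 / 2 + ((-x ^ 2 / 2 : ℝ) : ℂ)).re =
      Real.sqrt 2 * x * z.re - (z.re ^ 2 - z.im ^ 2) / 2 - x ^ 2 / 2 := by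
    have : (z ^ 2 / 2).re = (z.re ^ 2 - z.im ^ 2) / 2 := by
      rw [show z ^ 2 / 2 = z ^ 2 / ((2 : ℝ) : ℂ) by simp, Complex.div_ofReal_re, sq, Complex.mul_re]
      ring
    rw [Complex.add_re, Complex.sub_re, Complex.re_ofReal_mul, this, Complex.ofReal_re]
    ring
  rw [h1]
  have h2 : z.re ^ 2 + z.im ^ 2 ≤ r ^ 2 := by
    have h3 : ‖z‖ ^ 2 = z.re ^ 2 + z.im ^ 2 := by
      rw [← Complex.normSq_eq_norm_sq, Complex.normSq_apply]; ring
    rw [← h3]; gcongr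
  have h3 : Real.sqrt 2 * x * z.re ≤ x ^ 2 / 4 + 2 * z.re ^ 2 := by
    have h4 : Real.sqrt 2 ^ 2 = 2 := Real.sq_sqrt (by norm_num)
    nlinarith [sq_nonneg (x / 2 - Real.sqrt 2 * z.re)]
  nlinarith [sq_nonneg z.re, sq_nonneg z.im]

/-- The Poisson summation formula for the generating function: up to `z ↦ i z` it is its own
Fourier transform. -/
theorem genFn_poisson {N : ℕ} (hN0 : 0 < N) (z : ℂ) (y : ℝ) :
    ∑' k : ℤ, Complex.exp (I * ((y * (k * gridStep N) : ℝ) : ℂ)) * genFn z (k * gridStep N) =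
      (Real.sqrt N : ℂ) * ∑' m : ℤ, genFn (I * z) (y - m * (N * gridStep N)) := by
  have hN' : (0 : ℝ) < N := by exact_mod_cast hN0
  have hNC : (N : ℂ) ≠ 0 := by exact_mod_cast hN0.ne'
  have hpi : (Real.pi : ℂ) ≠ 0 := by exact_mod_cast Real.pi_ne_zero
  set h := gridStep N with hh
  have hsq : (h : ℂ) ^ 2 * N = 2 * Real.pi := by exact_mod_cast gridStep_sq_mul hN0
  have hs2 : (Real.sqrt 2 : ℂ) ^ 2 = 2 := by exact_mod_cast Real.sq_sqrt (show (0 : ℝ) ≤ 2 by norm_num)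
  have ha : 0 < ((1 / N : ℝ) : ℂ).re := by rw [Complex.ofReal_re]; positivity
  set b : ℂ := (Real.sqrt 2 * z * h + I * y * h) / (2 * Real.pi) with hb
  have key := Complex.tsum_exp_neg_quadratic ha b
  have hroot : 1 / (((1 / N : ℝ) : ℂ)) ^ (1 / 2 : ℂ) = (Real.sqrt N : ℂ) := by
    have : (1 / 2 : ℂ) = ((1 / 2 : ℝ) : ℂ) := by push_cast; rfl
    rw [this, ← Complex.ofReal_cpow (by positivity), ← Real.sqrt_eq_rpow]
    rw [← Complex.ofReal_one, ← Complex.ofReal_div]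
    congr 1
    rw [Real.sqrt_div (by norm_num), Real.sqrt_one]; simp
  rw [hroot] at key
  have hl : ∀ k : ℤ, Complex.exp (I * ((y * (k * h) : ℝ) : ℂ)) * genFn z (k * h) =
      Complex.exp (-z ^ 2 / 2) * Complex.exp (-Real.pi * ((1 / N : ℝ) : ℂ) * k ^ 2 +
        2 * Real.pi * b * k) := by
    intro k
    unfold genFn
    rw [← Complex.exp_add, ← Complex.exp_add]
    congr 1
    have hp : (Real.pi : ℂ) = h ^ 2 * N / 2 := by rw [hsq]; ring
    have h1 : 2 * Real.pi * b = Real.sqrt 2 * z * h + I * y * h := by rw [hb]; field_simp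
    rw [h1]
    push_cast
    rw [hp]
    field_simp
    ring
  have hr : ∀ m : ℤ, genFn (I * z) (y - m * (N * h)) =
      Complex.exp (-z ^ 2 / 2) *
        Complex.exp (-Real.pi / ((1 / N : ℝ) : ℂ) * (m + I * b) ^ 2) := by
    intro m
    unfold genFn
    rw [← Complex.exp_add]
    congr 1
    have hNh : (N : ℂ) = 2 * Real.pi / h ^ 2 := by
      rw [← hsq]; field_simp [show (h : ℂ) ≠ 0 by exact_mod_cast (gridStep_pos hN0).ne']
    have hh0 : (h : ℂ) ≠ 0 := by exact_mod_cast (gridStep_pos hN0).ne'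
    have h1 : -(Real.pi : ℂ) / ((1 / N : ℝ) : ℂ) * (m + I * b) ^ 2 =
        -((m * (N * h) + I * (Real.sqrt 2 * z + I * y)) ^ 2) / 2 := by
      rw [hb]
      push_cast
      rw [hNh]
      field_simp
    rw [h1]
    push_cast
    have hI : I ^ 2 = -1 := Complex.I_sq
    linear_combination (Real.sqrt 2 * y * z * I + y * m * N * h + y ^ 2 / 2 * (I ^ 2 - 1) +
      z ^ 2 / 2) * hI + I ^ 2 * z ^ 2 / 2 * hs2
  simp only [hl, hr, tsum_mul_left]
  rw [key]
  ring

/-! ### Fourier defect of the generating function -/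

/-- The constant `∑_{k ∈ ℤ} e^{-π|k|/8}` controlling the tails in the Poisson summation formula. -/
def tailConst : ℝ := ∑' k : ℤ, Real.exp (-(Real.pi * |(k : ℝ)| / 8))

theorem summable_tail : Summable fun k : ℤ => Real.exp (-(Real.pi * |(k : ℝ)| / 8)) := by
  have h : Summable fun n : ℕ => Real.exp (n * (-(Real.pi / 8))) :=
    Real.summable_exp_nat_mul_iff.2 (by linarith [Real.pi_pos])
  refine Summable.of_nat_of_neg ?_ ?_ <;>
  · refine h.congr fun n => ?_
    congr 1
    push_cast
    simp only [abs_neg, Nat.abs_cast]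
    ring

theorem tailConst_nonneg : 0 ≤ tailConst := tsum_nonneg fun _ => (Real.exp_pos _).le

/-- A bilateral series equals its sum over a finite set up to the bound on the other terms. -/
theorem norm_tsum_sub_sum_le {f : ℤ → ℂ} {S : Finset ℤ} {B : ℝ} (hB : 0 ≤ B)
    (hf : ∀ k ∉ S, ‖f k‖ ≤ B * Real.exp (-(Real.pi * |(k : ℝ)| / 8))) :
    ‖∑' k, f k - ∑ k ∈ S, f k‖ ≤ B * tailConst := by
  classical
  have hg := summable_tail.mul_left B
  have hs : Summable f := Summable.of_norm_bounded_eventually hg (by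
    rw [Filter.eventually_cofinite]
    refine S.finite_toSet.subset fun k hk => ?_
    by_contra hc
    exact hk (hf k hc))
  have h1 : HasSum (fun k => if k ∈ S then f k else 0) (∑ k ∈ S, f k) := by
    have := hasSum_sum_of_ne_finset_zero (f := fun k => if k ∈ S then f k else 0) (s := S)
      (L := SummationFilter.unconditional ℤ) (fun b hb => by simp [hb])
    convert this using 1
    exact Finset.sum_congr rfl fun k hk => by simp [hk]
  have h2 := (hs.hasSum.sub h1)
  rw [← h2.tsum_eq]
  have h3 : HasSum (fun k : ℤ => B * Real.exp (-(Real.pi * |(k : ℝ)| / 8))) (B * tailConst) :=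
    summable_tail.hasSum.mul_left B
  refine tsum_of_norm_bounded h3 fun k => ?_
  by_cases hk : k ∈ S
  · simp only [hk, if_true, sub_self, norm_zero]; positivity
  · simpa [hk] using hf k hk

/-- The defect of the discrete Fourier transform on the sampled generating function: the continuous
Fourier transform would map `genFn z` to `genFn (i z)`. -/
def genErr (N : ℕ) (j : Fin N) (z : ℂ) : ℂ :=
  ∑ k, Fcd N j k * genFn z (gridPt N k) - genFn (I * z) (gridPt N j)

/-- By Poisson summation the defect consists of the terms of the left series off the grid and the
terms `m ≠ 0` of the right one; all of these are evaluated at distance at least `(N/2) h` from the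
origin, where the Gaussian is exponentially small in `N`. -/
theorem norm_genErr_le {N : ℕ} (hN : Even N) (hN2 : 2 ≤ N) (j : Fin N) {z : ℂ} {r : ℝ}
    (hz : ‖z‖ ≤ r) :
    ‖genErr N j z‖ ≤ 2 * tailConst * Real.exp (5 * r ^ 2 / 2 - Real.pi * N / 16) := by
  classical
  have hN0 : 0 < N := by omega
  have hN' : (0 : ℝ) < N := by exact_mod_cast hN0
  have hN2' : (2 : ℝ) ≤ N := by exact_mod_cast hN2
  set h := gridStep N with hh
  have hpos : 0 < h := gridStep_pos hN0
  have hsq : h ^ 2 * N = 2 * Real.pi := gridStep_sq_mul hN0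
  have hpi := Real.pi_pos
  set y := gridPt N j with hy
  set A := Real.exp (5 * r ^ 2 / 2 - Real.pi * N / 16) with hA
  set f : ℤ → ℂ := fun k => Complex.exp (I * ((y * (k * h) : ℝ) : ℂ)) * genFn z (k * h) with hf
  set g : ℤ → ℂ := fun m => genFn (I * z) (y - m * (N * h)) with hg
  set φ : Fin N → ℤ := fun k => (k : ℤ) - (N : ℤ) / 2 with hφ
  have hφi : Function.Injective φ := fun a b hab => by
    simp only [hφ] at hab
    exact Fin.ext (by omega)
  set S : Finset ℤ := Finset.univ.image φ with hS
  have hSum : ∑ k ∈ S, f k = ∑ k, Complex.exp (I * ((y * gridPt N k : ℝ) : ℂ)) *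
      genFn z (gridPt N k) := by
    rw [hS, Finset.sum_image fun a _ b _ hab => hφi hab]
    rfl
  have hfb : ∀ k ∉ S, ‖f k‖ ≤ A * Real.exp (-(Real.pi * |(k : ℝ)| / 8)) := by
    intro k hk
    have hk2 : (N : ℝ) / 2 ≤ |(k : ℝ)| := by
      by_contra! hc
      apply hk
      obtain ⟨m, rfl⟩ := hN
      have h1 := abs_lt.1 hc
      have h2 : -(m : ℤ) < k := by
        have : (-(m : ℝ)) < k := by push_cast at h1; linarith
        exact_mod_cast this
      have h3 : k < m := by
        have : (k : ℝ) < m := by push_cast at h1; linarith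
        exact_mod_cast this
      rw [hS, Finset.mem_image]
      refine ⟨⟨(k + m).toNat, by omega⟩, Finset.mem_univ _, ?_⟩
      simp only [hφ]
      push_cast
      omega
    have h1 : ‖Complex.exp (I * ((y * (k * h) : ℝ) : ℂ))‖ = 1 := by
      rw [mul_comm, Complex.norm_exp_ofReal_mul_I]
    simp only [hf]
    rw [norm_mul, h1, one_mul, hA, ← Real.exp_add]
    refine (norm_genFn_le hz _).trans (Real.exp_le_exp.2 ?_)
    have h2 : (k * h) ^ 2 = |(k : ℝ)| * |(k : ℝ)| * h ^ 2 := by rw [abs_mul_abs_self]; ring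
    have h3 : Real.pi * |(k : ℝ)| ≤ (k * h) ^ 2 := by
      calc Real.pi * |(k : ℝ)| = |(k : ℝ)| * ((N / 2) * h ^ 2) := by
            rw [show (N : ℝ) / 2 * h ^ 2 = (h ^ 2 * N) / 2 by ring, hsq]; ring
        _ ≤ |(k : ℝ)| * (|(k : ℝ)| * h ^ 2) := by gcongr
        _ = _ := by rw [h2]; ring
    have h4 : Real.pi * (N / 2) ≤ Real.pi * |(k : ℝ)| := by gcongr
    linarith
  have hgb : ∀ m ∉ ({0} : Finset ℤ), ‖g m‖ ≤ A * Real.exp (-(Real.pi * |(m : ℝ)| / 8)) := by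
    intro m hm
    have hm1 : 1 ≤ |(m : ℝ)| := by
      have : m ≠ 0 := by simpa using hm
      exact_mod_cast Int.one_le_abs this
    simp only [hg]
    rw [hA, ← Real.exp_add]
    refine (norm_genFn_le (r := r) (by simpa using hz) _).trans (Real.exp_le_exp.2 ?_)
    have hyb := abs_gridPt_le hN j
    rw [← hy, ← hh] at hyb
    have h1 : |(m : ℝ)| * (N * h) / 2 ≤ |y - m * (N * h)| := by
      have h2 : |(m : ℝ) * (N * h)| = |(m : ℝ)| * (N * h) := by
        rw [abs_mul, abs_of_pos (by positivity : (0 : ℝ) < N * h)]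
      have h3 := abs_sub_abs_le_abs_sub ((m : ℝ) * (N * h)) y
      rw [abs_sub_comm, h2] at h3
      have : N * h ≤ |(m : ℝ)| * (N * h) := le_mul_of_one_le_left (by positivity) hm1
      linarith
    have h2 : Real.pi * N * |(m : ℝ)| / 2 ≤ (y - m * (N * h)) ^ 2 := by
      rw [← sq_abs (y - _)]
      calc Real.pi * N * |(m : ℝ)| / 2 = (h ^ 2 * N) * N * (|(m : ℝ)| * 1) / 4 := by rw [hsq]; ring
        _ ≤ (h ^ 2 * N) * N * (|(m : ℝ)| * |(m : ℝ)|) / 4 := by gcongr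
        _ = (|(m : ℝ)| * (N * h) / 2) ^ 2 := by ring
        _ ≤ _ := by gcongr
    have h3 : Real.pi * N * 1 ≤ Real.pi * N * |(m : ℝ)| := by gcongr
    have h4 : Real.pi * 2 * |(m : ℝ)| ≤ Real.pi * N * |(m : ℝ)| := by gcongr
    linarith
  have e1 := norm_tsum_sub_sum_le (Real.exp_pos _).le hfb
  have e2 := norm_tsum_sub_sum_le (Real.exp_pos _).le hgb
  rw [hSum] at e1
  simp only [Finset.sum_singleton] at e2
  have hg0 : g 0 = genFn (I * z) y := by simp [hg]
  rw [hg0] at e2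
  have hP : ∑' k, f k = (Real.sqrt N : ℂ) * ∑' m, g m := genFn_poisson hN0 z y
  set Tf := ∑' k, f k
  set Tg := ∑' m, g m
  set Sf := ∑ k, Complex.exp (I * ((y * gridPt N k : ℝ) : ℂ)) * genFn z (gridPt N k)
  have hsN : (1 : ℝ) ≤ Real.sqrt N := by
    rw [Real.one_le_sqrt]; linarith
  have hsN0 : (Real.sqrt N : ℂ) ≠ 0 := by exact_mod_cast (by linarith : Real.sqrt N ≠ 0)
  have hid : genErr N j z = (Tg - genFn (I * z) y) - ((1 / Real.sqrt N : ℝ) : ℂ) * (Tf - Sf) := by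
    have : ∑ k, Fcd N j k * genFn z (gridPt N k) = ((1 / Real.sqrt N : ℝ) : ℂ) * Sf := by
      rw [Finset.mul_sum]
      refine Finset.sum_congr rfl fun k _ => ?_
      rw [Fcd_apply, mul_assoc]
    rw [genErr, this, hP]
    push_cast
    field_simp
    ring
  rw [hid]
  calc _ ≤ ‖Tg - genFn (I * z) y‖ + ‖((1 / Real.sqrt N : ℝ) : ℂ) * (Tf - Sf)‖ := norm_sub_le _ _
    _ ≤ A * tailConst + 1 * (A * tailConst) := by
        gcongr
        rw [norm_mul]
        gcongr
        rw [Complex.norm_real, Real.norm_of_nonneg (by positivity), div_le_one (by linarith)]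
        exact hsN
    _ = _ := by ring

/-! ### Fourier defect of the sampled Hermite states -/

theorem contDiff_genFn (x : ℝ) {n : WithTop ℕ∞} : ContDiff ℂ n fun z => genFn z x := by
  unfold genFn; fun_prop

theorem iteratedDeriv_genFn (n : ℕ) (x : ℝ) :
    iteratedDeriv n (fun z : ℂ => genFn z x) = fun z : ℂ =>
      Polynomial.aeval (((Real.sqrt 2 * x : ℝ) : ℂ) - z) (Polynomial.hermite n) * genFn z x := by
  induction n with
  | zero => simp
  | succ n ih =>
    rw [iteratedDeriv_succ, ih]
    funext z
    have h1 : HasDerivAt (fun z : ℂ => ((Real.sqrt 2 * x : ℝ) : ℂ) - z) (-1) z := by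
      simpa using (hasDerivAt_id z).const_sub ((Real.sqrt 2 * x : ℝ) : ℂ)
    have h2 : HasDerivAt (fun z : ℂ => Polynomial.aeval (((Real.sqrt 2 * x : ℝ) : ℂ) - z)
        (Polynomial.hermite n)) (Polynomial.aeval (((Real.sqrt 2 * x : ℝ) : ℂ) - z)
        (Polynomial.derivative (Polynomial.hermite n)) * (-1)) z :=
      (Polynomial.hasDerivAt_aeval (Polynomial.hermite n) _).comp z h1
    have h3 : HasDerivAt (fun z => genFn z x)
        (genFn z x * (((Real.sqrt 2 * x : ℝ) : ℂ) - z)) z := by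
      unfold genFn
      refine HasDerivAt.cexp ?_
      have h4 := (((hasDerivAt_id z).const_mul ((Real.sqrt 2 * x : ℝ) : ℂ)).sub
        ((hasDerivAt_pow 2 z).div_const 2)).add_const ((-x ^ 2 / 2 : ℝ) : ℂ)
      refine h4.congr_deriv ?_
      norm_num
    rw [(h2.fun_mul h3).deriv, Polynomial.hermite_succ]
    simp only [map_sub, map_mul, Polynomial.aeval_X]
    ring

/-- The sampled Hermite states are Taylor coefficients of the generating function. -/
theorem hst_eq_iteratedDeriv (N n : ℕ) (i : Fin N) :
    hst N n i = ((1 / Real.sqrt n.factorial : ℝ) : ℂ) *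
      iteratedDeriv n (fun z => genFn z (gridPt N i)) 0 := by
  rw [iteratedDeriv_genFn, hst]
  have h : Polynomial.aeval (((Real.sqrt 2 * gridPt N i : ℝ) : ℂ)) (Polynomial.hermite n) =
      ((Polynomial.aeval (Real.sqrt 2 * gridPt N i) (Polynomial.hermite n) : ℝ) : ℂ) :=
    Polynomial.aeval_algebraMap_apply ℂ (Real.sqrt 2 * gridPt N i) _
  simp only [sub_zero]
  rw [h, genFn]
  simp only [mul_zero, ne_eq, OfNat.ofNat_ne_zero, not_false_eq_true, zero_pow, zero_div, sub_self,
    zero_add]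
  rw [← Complex.ofReal_exp]
  push_cast
  ring

/-- The Cauchy estimate, in which `√(n!) / r ^ n ≤ 1` because `n! ≤ n ^ n ≤ r ^ (2 n)`. -/
theorem norm_taylorCoeff_le {f : ℂ → ℂ} (hf : ContDiff ℂ 1 f) {r C : ℝ} (hr : 0 < r) {n : ℕ}
    (hn : (n : ℝ) ≤ r ^ 2) (hC : ∀ z, ‖z‖ ≤ r → ‖f z‖ ≤ C) :
    ‖((1 / Real.sqrt n.factorial : ℝ) : ℂ) * iteratedDeriv n f 0‖ ≤ C := by
  have hd : Differentiable ℂ f := hf.differentiable (by norm_num)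
  have h1 := Complex.norm_iteratedDeriv_le_of_forall_mem_sphere_norm_le (c := 0) (R := r) (C := C)
    n hr hd.diffContOnCl (fun z hz => hC z (by simpa using hz.le))
  have hC0 : 0 ≤ C := (norm_nonneg _).trans (hC 0 (by simpa using hr.le))
  have hfac : 0 < Real.sqrt n.factorial := Real.sqrt_pos.2 (by positivity)
  have h2 : Real.sqrt n.factorial ≤ r ^ n := by
    apply Real.sqrt_le_iff.2 ⟨by positivity, ?_⟩
    calc (n.factorial : ℝ) ≤ (n : ℝ) ^ n := by exact_mod_cast Nat.factorial_le_pow n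
      _ ≤ (r ^ 2) ^ n := by gcongr
      _ = _ := by ring
  rw [norm_mul, Complex.norm_real, Real.norm_of_nonneg (by positivity)]
  calc _ ≤ 1 / Real.sqrt n.factorial * (n.factorial * C / r ^ n) := by gcongr
    _ = Real.sqrt n.factorial * C / r ^ n := by
        have : (n.factorial : ℝ) = Real.sqrt n.factorial * Real.sqrt n.factorial :=
          (Real.mul_self_sqrt (by positivity)).symm
        nth_rewrite 2 [this]
        field_simp
    _ ≤ r ^ n * C / r ^ n := by gcongr
    _ = C := by field_simp

theorem norm_hst_le {N n : ℕ} (i : Fin N) {r : ℝ} (hr : 0 < r) (hn : (n : ℝ) ≤ r ^ 2) :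
    ‖hst N n i‖ ≤ Real.exp (5 * r ^ 2 / 2) := by
  rw [hst_eq_iteratedDeriv]
  refine norm_taylorCoeff_le (contDiff_genFn _) hr hn fun z hz => (norm_genFn_le hz _).trans ?_
  gcongr
  linarith [sq_nonneg (gridPt N i)]

/-- The defect of the sampled Hermite state as an eigenvector of the discrete Fourier transform, with
eigenvalue `iⁿ`. -/
def fErr (N n : ℕ) : Fin N → ℂ := Fcd N *ᵥ hst N n - I ^ n • hst N n

theorem fErr_eq_iteratedDeriv (N n : ℕ) (j : Fin N) :
    fErr N n j = ((1 / Real.sqrt n.factorial : ℝ) : ℂ) * iteratedDeriv n (genErr N j) 0 := by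
  have hc : ∀ x : ℝ, ContDiffAt ℂ n (fun z => genFn z x) 0 := fun x => (contDiff_genFn x).contDiffAt
  have hc2 : ContDiff ℂ n (fun z => genFn z (gridPt N j)) := contDiff_genFn _
  unfold genErr
  rw [iteratedDeriv_fun_sub, iteratedDeriv_fun_sum, iteratedDeriv_comp_const_mul hc2 I]
  · simp only [iteratedDeriv_const_mul_field, mul_zero]
    simp only [fErr, Pi.sub_apply, Pi.smul_apply, smul_eq_mul, Matrix.mulVec, dotProduct,
      hst_eq_iteratedDeriv, mul_sub, Finset.mul_sum]
    congr 1
    · exact Finset.sum_congr rfl fun k _ => by ring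
    · ring
  · exact fun i _ => contDiffAt_const.mul (hc _)
  · exact ContDiffAt.sum fun i _ => contDiffAt_const.mul (hc _)
  · exact (hc2.comp (contDiff_const.mul contDiff_id)).contDiffAt

theorem norm_fErr_le {N n : ℕ} (hN : Even N) (hN2 : 2 ≤ N) (j : Fin N) {r : ℝ} (hr : 0 < r)
    (hn : (n : ℝ) ≤ r ^ 2) :
    ‖fErr N n j‖ ≤ 2 * tailConst * Real.exp (5 * r ^ 2 / 2 - Real.pi * N / 16) := by
  rw [fErr_eq_iteratedDeriv]
  refine norm_taylorCoeff_le ?_ hr hn fun z hz => norm_genErr_le hN hN2 j hz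
  unfold genErr
  refine ContDiff.sub (ContDiff.sum fun i _ => contDiff_const.mul (contDiff_genFn _)) ?_
  exact (contDiff_genFn (gridPt N j)).comp (contDiff_const.mul contDiff_id)

/-! ### Residuals and conditioning of the sampled Hermite states -/

theorem gridPt_sq_mul_hst (N n : ℕ) (i : Fin N) :
    2 * ((gridPt N i ^ 2 : ℝ) : ℂ) * hst N n i =
      ((Real.sqrt (n + 1) * Real.sqrt (n + 2) : ℝ) : ℂ) * hst N (n + 2) i +
        (2 * n + 1) * hst N n i +
        ((Real.sqrt n * Real.sqrt (n - 1) : ℝ) : ℂ) * hst N (n - 2) i := by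
  have h0 := gridPt_mul_hst N n i
  have h1 := gridPt_mul_hst N (n + 1) i
  have h2 := gridPt_mul_hst N (n - 1) i
  have hs2 : (Real.sqrt 2 : ℂ) ^ 2 = 2 := by exact_mod_cast Real.sq_sqrt (show (0 : ℝ) ≤ 2 by norm_num)
  have hn1 : (Real.sqrt (n + 1) : ℂ) ^ 2 = n + 1 := by
    exact_mod_cast Real.sq_sqrt (show (0 : ℝ) ≤ (n : ℝ) + 1 by positivity)
  have hn0 : (Real.sqrt n : ℂ) ^ 2 = n := by
    exact_mod_cast Real.sq_sqrt (show (0 : ℝ) ≤ (n : ℝ) by positivity)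
  have e1 : ((n + 1 : ℕ) : ℝ) + 1 = n + 2 := by push_cast; ring
  rw [e1] at h1
  have h3 : (Real.sqrt n : ℂ) * (((Real.sqrt 2 * gridPt N i : ℝ) : ℂ) * hst N (n - 1) i) =
      Real.sqrt n * (Real.sqrt n * hst N n i + Real.sqrt (n - 1) * hst N (n - 2) i) := by
    cases n with
    | zero => simp
    | succ m =>
      rw [h2]
      simp
  simp only [Nat.cast_add, Nat.cast_one, Nat.add_sub_cancel, add_assoc] at h1
  norm_num at h1
  push_cast at h0 h1 h3 ⊢
  linear_combination (Real.sqrt 2 * gridPt N i) * h0 + Real.sqrt (n + 1) * h1 + h3 -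
    gridPt N i ^ 2 * hst N n i * hs2 + hst N n i * hn1 + hst N n i * hn0

/-- Conjugating by the discrete Fourier transform, the residual of a sampled Hermite state as an
eigenvector of the oscillator is a combination of its Fourier defects. -/
theorem Fcd_residual {N : ℕ} (hN0 : 0 < N) (n : ℕ) (j : Fin N) :
    4 * (Fcd N *ᵥ (Hd N *ᵥ hst N n - (((n : ℝ) + 1 / 2 : ℝ) : ℂ) • hst N n)) j =
      ((Real.sqrt (n + 1) * Real.sqrt (n + 2) : ℝ) : ℂ) * fErr N (n + 2) j -
        (2 * n + 1) * fErr N n j +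
        ((Real.sqrt n * Real.sqrt (n - 1) : ℝ) : ℂ) * fErr N (n - 2) j +
        2 * ((gridPt N j ^ 2 : ℝ) : ℂ) * fErr N n j := by
  have hF : ∀ m, (Fcd N *ᵥ hst N m) j = fErr N m j + I ^ m * hst N m j := fun m => by
    simp [fErr]
  have hx : (2 : ℂ) • (xd N ^ 2 *ᵥ hst N n) =
      ((Real.sqrt (n + 1) * Real.sqrt (n + 2) : ℝ) : ℂ) • hst N (n + 2) +
        (2 * n + 1 : ℂ) • hst N n +
        ((Real.sqrt n * Real.sqrt (n - 1) : ℝ) : ℂ) • hst N (n - 2) := by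
    funext i
    have := gridPt_sq_mul_hst N n i
    simp only [Pi.smul_apply, Pi.add_apply, smul_eq_mul, xd_sq_mulVec]
    rw [← this]; ring
  have hFx := congrFun (congrArg (fun w => Fcd N *ᵥ w) hx) j
  simp only [Matrix.mulVec_add, Matrix.mulVec_smul, Pi.add_apply, Pi.smul_apply, smul_eq_mul, hF]
    at hFx
  have hc : ((Real.sqrt n * Real.sqrt (n - 1) : ℝ) : ℂ) * I ^ (n - 2) =
      -((Real.sqrt n * Real.sqrt (n - 1) : ℝ) : ℂ) * I ^ n := by
    rcases n with _ | _ | m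
    · simp
    · simp
    · simp only [show m + 1 + 1 - 2 = m by omega]
      rw [pow_succ, pow_succ, mul_assoc, Complex.I_mul_I]; push_cast; ring
  have h2 : I ^ (n + 2) = -I ^ n := by rw [pow_add, Complex.I_sq]; ring
  rw [h2] at hFx
  rw [Matrix.mulVec_sub, Matrix.mulVec_smul, Fcd_mulVec_Hd hN0]
  simp only [Pi.sub_apply, Pi.smul_apply, Pi.add_apply, smul_eq_mul, xd_sq_mulVec, hF]
  have hg := gridPt_sq_mul_hst N n j
  push_cast at hFx hc hg ⊢
  linear_combination hFx + I ^ n * hg + hst N (n - 2) j * hc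

/-- The discrete Fourier transform is unitary, so the residual is bounded by the Fourier defects with
coefficients polynomial in `N`. -/
theorem residual_le {N : ℕ} (hN : Even N) (hN0 : 0 < N) {n : ℕ} (hn : n + 1 ≤ N) {δ : ℝ}
    (hδ : ∀ m ≤ n + 2, ∀ j, ‖fErr N m j‖ ≤ δ) :
    ∑ i, ‖(Hd N *ᵥ hst N n - (((n : ℝ) + 1 / 2 : ℝ) : ℂ) • hst N n) i‖ ^ 2 ≤
      (2 * N ^ 2 * δ) ^ 2 := by
  have hN' : (1 : ℝ) ≤ N := by exact_mod_cast hN0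
  have hn' : (n : ℝ) + 1 ≤ N := by exact_mod_cast hn
  rw [← Fcd_norm_sq hN0]
  have hδ0 : 0 ≤ δ := (norm_nonneg _).trans (hδ 0 (by omega) ⟨0, hN0⟩)
  have hj : ∀ j, ‖(Fcd N *ᵥ (Hd N *ᵥ hst N n - (((n : ℝ) + 1 / 2 : ℝ) : ℂ) • hst N n)) j‖ ≤
      2 * N * δ := by
    intro j
    have h := congrArg norm (Fcd_residual hN0 n j)
    rw [norm_mul] at h
    set R := ‖(Fcd N *ᵥ (Hd N *ᵥ hst N n - (((n : ℝ) + 1 / 2 : ℝ) : ℂ) • hst N n)) j‖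
    have ha : Real.sqrt (n + 1) * Real.sqrt (n + 2) ≤ n + 2 := by
      calc _ ≤ Real.sqrt (n + 2) * Real.sqrt (n + 2) := by gcongr; norm_num
        _ = _ := Real.mul_self_sqrt (by positivity)
    have hc : Real.sqrt n * Real.sqrt (n - 1) ≤ n := by
      calc _ ≤ Real.sqrt n * Real.sqrt n := by gcongr; linarith
        _ = _ := Real.mul_self_sqrt (by positivity)
    have hx := gridPt_sq_le hN hN0 j
    have n1 : ‖((Real.sqrt (n + 1) * Real.sqrt (n + 2) : ℝ) : ℂ) * fErr N (n + 2) j‖ ≤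
        (n + 2) * δ := by
      rw [norm_mul, Complex.norm_real, Real.norm_of_nonneg (by positivity)]
      gcongr; exact hδ _ le_rfl _
    have n2 : ‖(2 * n + 1 : ℂ) * fErr N n j‖ ≤ (2 * n + 1) * δ := by
      rw [norm_mul, show (2 * n + 1 : ℂ) = ((2 * n + 1 : ℝ) : ℂ) by push_cast; rfl,
        Complex.norm_real, Real.norm_of_nonneg (by positivity)]
      gcongr; exact hδ _ (by omega) _
    have n3 : ‖((Real.sqrt n * Real.sqrt (n - 1) : ℝ) : ℂ) * fErr N (n - 2) j‖ ≤ n * δ := by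
      rw [norm_mul, Complex.norm_real, Real.norm_of_nonneg (by positivity)]
      gcongr; exact hδ _ (by omega) _
    have n4 : ‖2 * ((gridPt N j ^ 2 : ℝ) : ℂ) * fErr N n j‖ ≤ 2 * (2 * N) * δ := by
      rw [norm_mul, norm_mul, Complex.norm_real, Real.norm_of_nonneg (by positivity)]
      gcongr
      · simp
      · exact hδ _ (by omega) _
    have h4 : ‖(4 : ℂ)‖ = 4 := by simp
    rw [h4] at h
    have h5 := (norm_add_le _ _).trans (add_le_add ((norm_add_le _ _).trans
      (add_le_add ((norm_sub_le _ _).trans (add_le_add n1 n2)) n3)) n4)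
    rw [← h] at h5
    nlinarith [mul_nonneg hδ0 (sub_nonneg.2 hn')]
  calc _ ≤ ∑ _j : Fin N, (2 * N * δ) ^ 2 := Finset.sum_le_sum fun j _ => by gcongr; exact hj j
    _ = N * (4 * N ^ 2 * δ ^ 2) := by
        rw [Finset.sum_const, Finset.card_univ, Fintype.card_fin, nsmul_eq_mul]; ring
    _ ≤ N ^ 2 * (4 * N ^ 2 * δ ^ 2) := by gcongr; nlinarith
    _ = _ := by ring

section Gram

variable {E : Type*} [NormedAddCommGroup E] [InnerProductSpace ℂ E]

/-- Approximate eigenvectors with eigenvalues at distance at least one are almost orthogonal. -/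
theorem inner_approx_eigenvectors {T : E →ₗ[ℂ] E} (hT : T.IsSymmetric) {f g : E} {n m : ℕ}
    (hnm : n ≠ m) {ε B : ℝ}
    (hf : ‖T f - (((n : ℝ) + 1 / 2 : ℝ) : ℂ) • f‖ ≤ ε)
    (hg : ‖T g - (((m : ℝ) + 1 / 2 : ℝ) : ℂ) • g‖ ≤ ε) (hfB : ‖f‖ ≤ B) (hgB : ‖g‖ ≤ B) :
    ‖inner ℂ f g‖ ≤ 2 * ε * B := by
  have hε : 0 ≤ ε := (norm_nonneg _).trans hf
  have h1 : (((n : ℝ) - m : ℝ) : ℂ) * inner ℂ f g =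
      inner ℂ f (T g - (((m : ℝ) + 1 / 2 : ℝ) : ℂ) • g) -
        inner ℂ (T f - (((n : ℝ) + 1 / 2 : ℝ) : ℂ) • f) g := by
    rw [inner_sub_left, inner_sub_right, inner_smul_left, inner_smul_right, hT f g,
      Complex.conj_ofReal]
    push_cast; ring
  have h2 : (1 : ℝ) ≤ |(n : ℝ) - m| := by
    have : (1 : ℤ) ≤ |(n : ℤ) - m| := Int.one_le_abs (by omega)
    exact_mod_cast this
  have h3 := congrArg norm h1
  rw [norm_mul, Complex.norm_real, Real.norm_eq_abs] at h3
  calc ‖inner ℂ f g‖ ≤ |(n : ℝ) - m| * ‖inner ℂ f g‖ :=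
        le_mul_of_one_le_left (norm_nonneg _) h2
    _ ≤ _ := h3.le
    _ ≤ ‖f‖ * ‖T g - (((m : ℝ) + 1 / 2 : ℝ) : ℂ) • g‖ +
        ‖T f - (((n : ℝ) + 1 / 2 : ℝ) : ℂ) • f‖ * ‖g‖ :=
        (norm_sub_le _ _).trans (add_le_add (norm_inner_le_norm _ _) (norm_inner_le_norm _ _))
    _ ≤ B * ε + ε * B := by
        have := (norm_nonneg f).trans hfB
        gcongr
    _ = _ := by ring

/-- The Hermite three-term recurrence transports the norm of `f 0` to all later `f n`, up to the
almost vanishing off-diagonal inner products. -/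
theorem norm_sq_step {Y : E →ₗ[ℂ] E} (hY : Y.IsSymmetric) {f : ℕ → E}
    (hrec : ∀ m : ℕ, Y (f m) = (Real.sqrt (m + 1) : ℂ) • f (m + 1) + (Real.sqrt m : ℂ) • f (m - 1))
    {η : ℝ} {n : ℕ} (h1 : 0 < n → ‖inner ℂ (f (n + 1)) (f (n - 1))‖ ≤ η)
    (h2 : ‖inner ℂ (f (n + 2)) (f n)‖ ≤ η) :
    ‖f n‖ ^ 2 - 3 * η ≤ ‖f (n + 1)‖ ^ 2 := by
  have hs := hY (f (n + 1)) (f n)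
  rw [hrec, hrec, inner_add_left, inner_add_right, inner_smul_left, inner_smul_left,
    inner_smul_right, inner_smul_right, Complex.conj_ofReal, Complex.conj_ofReal,
    Nat.add_sub_cancel, inner_self_eq_norm_sq_to_K, inner_self_eq_norm_sq_to_K] at hs
  have hη : 0 ≤ η := (norm_nonneg _).trans h2
  have hr := congrArg Complex.re hs
  simp only [Complex.add_re, Complex.re_ofReal_mul] at hr
  have hre : ∀ t : ℝ, ((t : ℂ) ^ 2).re = t ^ 2 := fun t => by
    rw [← Complex.ofReal_pow, Complex.ofReal_re]
  have hre1 := hre ‖f n‖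
  have hre2 := hre ‖f (n + 1)‖
  simp only [Complex.coe_algebraMap] at hr
  rw [hre1, hre2] at hr
  have a1 : -η ≤ (inner ℂ (f (n + 2)) (f n)).re :=
    (abs_le.1 ((Complex.abs_re_le_norm _).trans h2)).1
  have a2 : (inner ℂ (f (n + 2)) (f n)).re ≤ η :=
    (abs_le.1 ((Complex.abs_re_le_norm _).trans h2)).2
  have b1 : Real.sqrt n * (inner ℂ (f (n + 1)) (f (n - 1))).re ≤ Real.sqrt n * η := by
    rcases Nat.eq_zero_or_pos n with rfl | hn
    · simp
    · gcongr
      exact (abs_le.1 ((Complex.abs_re_le_norm _).trans (h1 hn))).2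
  have hq : 1 ≤ Real.sqrt ((n : ℝ) + 1) := by
    rw [Real.one_le_sqrt]; linarith [Nat.cast_nonneg (α := ℝ) n]
  have s1 : Real.sqrt n ≤ Real.sqrt ((n : ℝ) + 1) := Real.sqrt_le_sqrt (by linarith)
  have s2 : Real.sqrt (((n + 1 : ℕ) : ℝ) + 1) ≤ 2 * Real.sqrt ((n : ℝ) + 1) := by
    apply Real.sqrt_le_iff.2 ⟨by positivity, ?_⟩
    rw [mul_pow, Real.sq_sqrt (by positivity)]
    push_cast; linarith [Nat.cast_nonneg (α := ℝ) n]
  have c1 : -(2 * Real.sqrt ((n : ℝ) + 1) * η) ≤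
      Real.sqrt (((n + 1 : ℕ) : ℝ) + 1) * (inner ℂ (f (n + 2)) (f n)).re := by
    have h0 : 0 ≤ Real.sqrt (((n + 1 : ℕ) : ℝ) + 1) := Real.sqrt_nonneg _
    nlinarith
  have c2 : Real.sqrt n * η ≤ Real.sqrt ((n : ℝ) + 1) * η := by gcongr
  have hcast : Real.sqrt ((n + 1 : ℕ) : ℝ) = Real.sqrt ((n : ℝ) + 1) := by push_cast; rfl
  rw [hcast] at hr
  have hfin : Real.sqrt ((n : ℝ) + 1) * (‖f n‖ ^ 2 - 3 * η) ≤
      Real.sqrt ((n : ℝ) + 1) * ‖f (n + 1)‖ ^ 2 := by linarith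
  exact le_of_mul_le_mul_left hfin (by linarith)

theorem gram_of_almost_orthogonal {f : ℕ → E} {M : ℕ} {η : ℝ}
    (hd : ∀ m ≤ M, 1 - 3 * M * η ≤ ‖f m‖ ^ 2)
    (ho : ∀ m ≤ M, ∀ k ≤ M, m ≠ k → ‖inner ℂ (f m) (f k)‖ ≤ η)
    (hη0 : 0 ≤ η) (hη : (4 * (M : ℝ) + 1) * η ≤ 3 / 4) (a : ℕ → ℂ) :
    1 / 4 * ∑ m ∈ Finset.range (M + 1), ‖a m‖ ^ 2 ≤
      ‖∑ m ∈ Finset.range (M + 1), a m • f m‖ ^ 2 := by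
  set S := Finset.range (M + 1)
  have h1 : ‖∑ m ∈ S, a m • f m‖ ^ 2 = ∑ m ∈ S, ∑ k ∈ S,
      (starRingEnd ℂ (a m) * (a k * inner ℂ (f m) (f k))).re := by
    rw [← inner_self_eq_norm_sq (𝕜 := ℂ), sum_inner]
    simp only [inner_sum, inner_smul_left, inner_smul_right, RCLike.re_eq_complex_re,
      Complex.re_sum]
    exact Finset.sum_congr rfl fun m _ => Finset.sum_congr rfl fun k _ => by rw [mul_left_comm]
  have h2 : ∀ m ∈ S, ∀ k ∈ S, (if m = k then ‖a m‖ ^ 2 * (1 - 3 * M * η) else 0) - η * (‖a m‖ * ‖a k‖) ≤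
      (starRingEnd ℂ (a m) * (a k * inner ℂ (f m) (f k))).re := by
    intro m hm k hk
    have hm' : m ≤ M := Nat.lt_succ_iff.1 (Finset.mem_range.1 hm)
    have hk' : k ≤ M := Nat.lt_succ_iff.1 (Finset.mem_range.1 hk)
    split_ifs with h
    · subst h
      have : (starRingEnd ℂ (a m) * (a m * inner ℂ (f m) (f m))).re = ‖a m‖ ^ 2 * ‖f m‖ ^ 2 := by
        rw [← mul_assoc, mul_comm (starRingEnd ℂ (a m)), Complex.mul_conj, Complex.re_ofReal_mul,
          Complex.normSq_eq_norm_sq]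
        congr 1
        exact inner_self_eq_norm_sq (𝕜 := ℂ) (f m)
      rw [this]
      have := mul_le_mul_of_nonneg_left (hd m hm') (sq_nonneg ‖a m‖)
      have := mul_nonneg hη0 (mul_self_nonneg ‖a m‖)
      linarith
    · have h3 : ‖starRingEnd ℂ (a m) * (a k * inner ℂ (f m) (f k))‖ ≤ η * (‖a m‖ * ‖a k‖) := by
        rw [norm_mul, norm_mul, RCLike.norm_conj]
        calc ‖a m‖ * (‖a k‖ * ‖inner ℂ (f m) (f k)‖) ≤ ‖a m‖ * (‖a k‖ * η) := by
              gcongr; exact ho m hm' k hk' h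
          _ = _ := by ring
      have := (abs_le.1 ((Complex.abs_re_le_norm _).trans h3)).1
      linarith
  have h3 : (∑ m ∈ S, ‖a m‖) ^ 2 ≤ ((M : ℝ) + 1) * ∑ m ∈ S, ‖a m‖ ^ 2 := by
    have := sq_sum_le_card_mul_sum_sq (s := S) (f := fun m => ‖a m‖)
    simpa [S] using this
  have h4 := Finset.sum_le_sum fun m hm => Finset.sum_le_sum fun k hk => h2 m hm k hk
  rw [← h1] at h4
  have h5 : ∑ m ∈ S, ∑ k ∈ S, ((if m = k then ‖a m‖ ^ 2 * (1 - 3 * M * η) else 0) -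
      η * (‖a m‖ * ‖a k‖)) = (1 - 3 * M * η) * ∑ m ∈ S, ‖a m‖ ^ 2 - η * (∑ m ∈ S, ‖a m‖) ^ 2 := by
    simp only [Finset.sum_sub_distrib, Finset.sum_ite_eq]
    rw [sq (∑ m ∈ S, ‖a m‖), Finset.sum_mul_sum, Finset.mul_sum, Finset.mul_sum]
    congr 1
    · exact Finset.sum_congr rfl fun m hm => by rw [if_pos hm]; ring
    · exact Finset.sum_congr rfl fun m hm => by rw [Finset.mul_sum]
  rw [h5] at h4
  have h6 : 0 ≤ ∑ m ∈ S, ‖a m‖ ^ 2 := by positivity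
  have h7 := mul_le_mul_of_nonneg_left h3 hη0
  nlinarith

/-- Approximate eigenvectors satisfying the Hermite recurrence form a uniformly well-conditioned
system. -/
theorem gram_lower {T Y : E →ₗ[ℂ] E} (hT : T.IsSymmetric) (hY : Y.IsSymmetric) {f : ℕ → E}
    (hrec : ∀ m : ℕ, Y (f m) = (Real.sqrt (m + 1) : ℂ) • f (m + 1) + (Real.sqrt m : ℂ) • f (m - 1))
    {M : ℕ} {ε B : ℝ}
    (hres : ∀ m ≤ M + 1, ‖T (f m) - (((m : ℝ) + 1 / 2 : ℝ) : ℂ) • f m‖ ≤ ε)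
    (hB : ∀ m ≤ M + 1, ‖f m‖ ≤ B) (h0 : 1 ≤ ‖f 0‖ ^ 2)
    (hη : (4 * (M : ℝ) + 1) * (2 * ε * B) ≤ 3 / 4) (a : ℕ → ℂ) :
    1 / 4 * ∑ m ∈ Finset.range (M + 1), ‖a m‖ ^ 2 ≤
      ‖∑ m ∈ Finset.range (M + 1), a m • f m‖ ^ 2 := by
  have hε : 0 ≤ ε := (norm_nonneg _).trans (hres 0 (by omega))
  have hB0 : 0 ≤ B := (norm_nonneg _).trans (hB 0 (by omega))
  have ho : ∀ m ≤ M + 1, ∀ k ≤ M + 1, m ≠ k → ‖inner ℂ (f m) (f k)‖ ≤ 2 * ε * B :=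
    fun m hm k hk hmk =>
      inner_approx_eigenvectors hT hmk (hres m hm) (hres k hk) (hB m hm) (hB k hk)
  have hη0 : 0 ≤ 2 * ε * B := by positivity
  have hd : ∀ m ≤ M, 1 - 3 * m * (2 * ε * B) ≤ ‖f m‖ ^ 2 := by
    intro m
    induction m with
    | zero => intro _; simpa using h0
    | succ m ih =>
      intro hm
      have h1 := ih (by omega)
      have h2 := norm_sq_step hY hrec (n := m)
        (fun hpos => ho (m + 1) (by omega) (m - 1) (by omega) (by omega))
        (ho (m + 2) (by omega) m (by omega) (by omega))
      push_cast
      linarith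
  refine gram_of_almost_orthogonal (fun m hm => le_trans ?_ (hd m hm))
    (fun m hm k hk => ho m (by omega) k (by omega)) hη0 hη a
  have : (m : ℝ) ≤ M := by exact_mod_cast hm
  gcongr

end Gram

/-! ### The spectral estimate -/

/-- The grid contains the origin, where the sampled Gaussian equals one. -/
theorem hst_norm_sq_zero_ge {N : ℕ} (hN : Even N) (hN0 : 0 < N) : 1 ≤ ∑ i, ‖hst N 0 i‖ ^ 2 := by
  have h : gridPt N ⟨N / 2, by omega⟩ = 0 := by
    obtain ⟨m, rfl⟩ := hN
    rw [gridPt_eq' ⟨m, rfl⟩]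
    have : (m + m) / 2 = m := by omega
    simp only [this]
    push_cast; ring
  have h1 : ‖hst N 0 ⟨N / 2, by omega⟩‖ ^ 2 = 1 := by
    rw [hst_zero, h]; simp
  rw [← h1]
  exact Finset.single_le_sum (f := fun i => ‖hst N 0 i‖ ^ 2) (fun i _ => by positivity)
    (Finset.mem_univ _)

set_option maxHeartbeats 1600000 in
/-- The spectral estimate for fixed `N`, under explicit smallness assumptions. -/
theorem eigenvalues_of_large {N K n : ℕ} (hN : Even N) (hK : 4 ≤ K) (h1 : 200 * K ≤ N)
    (h2 : N ≤ 400 * K) (hbig : 400 ≤ (N : ℝ) / (12800 ^ 2 * 40))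
    (hsm1 : 8 * tailConst * Real.exp 16 * N ^ 4 * Real.exp (-(7 / 80 * N)) ≤ 3 / 4)
    (hsm2 : 16 * N ^ 2 * (4 * tailConst * Real.exp 8 * N ^ 2) ^ 2 * Real.exp (-(14 / 80 * N)) ≤ 1)
    (hn : (n : ℝ) ≤ N / (12800 ^ 2 * 320)) (hH : (Hd N).IsHermitian) (hnN : n < N) :
    |(hH.eigenvalues ∘ Tuple.sort hH.eigenvalues) ⟨n, hnN⟩ - ((n : ℝ) + 1 / 2)|
      ≤ Real.exp (-(1 / 20 * N)) := by
  have hN0 : 0 < N := by omega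
  have hN' : (1 : ℝ) ≤ N := by exact_mod_cast hN0
  have h1' : 200 * (K : ℝ) ≤ N := by exact_mod_cast h1
  have h2' : (N : ℝ) ≤ 400 * K := by exact_mod_cast h2
  have hK' : (4 : ℝ) ≤ K := by exact_mod_cast hK
  have htc := tailConst_nonneg
  have hpi := Real.pi_gt_three
  set M := 4 * K with hM
  have hMc : (M : ℝ) = 4 * K := by rw [hM]; push_cast; ring
  have hnM : n ≤ M := by
    have : (n : ℝ) ≤ M := by
      rw [hMc]
      refine hn.trans ?_
      rw [div_le_iff₀ (by norm_num)]
      linarith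
    exact_mod_cast this
  -- the radius of the Cauchy estimates, admissible for all degrees up to `M + 3`
  set r : ℝ := Real.sqrt (M + 3) with hr
  have hr0 : 0 < r := Real.sqrt_pos.2 (by positivity)
  have hr2 : r ^ 2 = M + 3 := Real.sq_sqrt (by positivity)
  have hr5 : 5 * r ^ 2 / 2 ≤ 8 + N / 20 := by rw [hr2, hMc]; linarith
  -- sup norm of the Fourier defects, weakening `π N / 16` to `3 N / 16`
  set δ : ℝ := 2 * tailConst * Real.exp (8 + N / 20 - 3 * N / 16) with hδ
  have hfErr : ∀ m ≤ M + 3, ∀ j, ‖fErr N m j‖ ≤ δ := by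
    intro m hm j
    have hm' : (m : ℝ) ≤ M + 3 := by exact_mod_cast hm
    refine (norm_fErr_le hN (by omega) j hr0 (by rw [hr2]; exact hm')).trans ?_
    rw [hδ]
    gcongr
  set ε : ℝ := 2 * N ^ 2 * δ with hε
  set Bf : ℝ := N * Real.exp (8 + N / 20) with hBf
  let T : EuclideanSpace ℂ (Fin N) →ₗ[ℂ] EuclideanSpace ℂ (Fin N) := Matrix.toLpLin 2 2 (Hd N)
  let Y : EuclideanSpace ℂ (Fin N) →ₗ[ℂ] EuclideanSpace ℂ (Fin N) := Matrix.toLpLin 2 2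
    (Matrix.diagonal fun i => ((Real.sqrt 2 * gridPt N i : ℝ) : ℂ))
  have hTa : ∀ v, T v = WithLp.toLp 2 (Hd N *ᵥ v.ofLp) := fun v => Matrix.toLpLin_apply _ _ _ _
  have hT : T.IsSymmetric := Matrix.isSymmetric_toEuclideanLin_iff.2 hH
  have hY : Y.IsSymmetric := by
    refine Matrix.isSymmetric_toEuclideanLin_iff.2 ?_
    refine Matrix.isHermitian_diagonal_of_self_adjoint _ ?_
    funext i
    simp
  let f : ℕ → EuclideanSpace ℂ (Fin N) := fun m => WithLp.toLp 2 (hst N m)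
  have hrec : ∀ m : ℕ,
      Y (f m) = (Real.sqrt (m + 1) : ℂ) • f (m + 1) + (Real.sqrt m : ℂ) • f (m - 1) := by
    intro m
    ext i
    have := gridPt_mul_hst N m i
    simp only [Y, f, Matrix.toLpLin_apply, Matrix.mulVec_diagonal, PiLp.add_apply, PiLp.smul_apply,
      smul_eq_mul]
    exact this
  have hδ0 : 0 ≤ δ := by positivity
  have hres : ∀ m ≤ M + 1, ‖T (f m) - (((m : ℝ) + 1 / 2 : ℝ) : ℂ) • f m‖ ≤ ε := by
    intro m hm
    refine le_of_sq_le_sq ?_ (by positivity)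
    rw [EuclideanSpace.norm_sq_eq]
    exact residual_le hN hN0 (by omega) fun k hk => hfErr k (by omega)
  have hB : ∀ m ≤ M + 1, ‖f m‖ ≤ Bf := by
    intro m hm
    have hm' : (m : ℝ) ≤ M + 1 := by exact_mod_cast hm
    refine le_of_sq_le_sq ?_ (by positivity)
    rw [EuclideanSpace.norm_sq_eq]
    calc ∑ i, ‖hst N m i‖ ^ 2 ≤ ∑ _i : Fin N, Real.exp (8 + N / 20) ^ 2 := by
          refine Finset.sum_le_sum fun i _ => ?_
          gcongr
          refine (norm_hst_le i hr0 (by rw [hr2]; linarith)).trans ?_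
          gcongr
      _ = N * Real.exp (8 + N / 20) ^ 2 := by
          rw [Finset.sum_const, Finset.card_univ, Fintype.card_fin, nsmul_eq_mul]
      _ ≤ N ^ 2 * Real.exp (8 + N / 20) ^ 2 := by gcongr; nlinarith
      _ = _ := by rw [hBf]; ring
  have hf0 : 1 ≤ ‖f 0‖ ^ 2 := by
    rw [EuclideanSpace.norm_sq_eq]
    exact hst_norm_sq_zero_ge hN hN0
  have hη : (4 * (M : ℝ) + 1) * (2 * ε * Bf) ≤ 3 / 4 := by
    refine le_trans ?_ hsm1
    have : 4 * (M : ℝ) + 1 ≤ N := by rw [hMc]; linarith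
    calc _ ≤ N * (2 * ε * Bf) := by gcongr
      _ = 8 * tailConst * N ^ 4 * (Real.exp (8 + N / 20 - 3 * N / 16) * Real.exp (8 + N / 20)) := by
          rw [hε, hBf, hδ]; ring
      _ = 8 * tailConst * N ^ 4 * (Real.exp 16 * Real.exp (-(7 / 80 * N))) := by
          rw [← Real.exp_add, ← Real.exp_add]; congr 2; ring
      _ = _ := by ring
  -- the ordered eigenbasis
  set σ := Tuple.sort hH.eigenvalues with hσ
  set lam : Fin N → ℝ := hH.eigenvalues ∘ σ with hlam
  have hmono : Monotone lam := Tuple.monotone_sort _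
  let w : OrthonormalBasis (Fin N) ℂ (EuclideanSpace ℂ (Fin N)) :=
    hH.eigenvectorBasis.reindex σ.symm
  have hw : ∀ i, T (w i) = (lam i : ℂ) • w i := by
    intro i
    have := hH.mulVec_eigenvectorBasis (σ i)
    simp only [w, OrthonormalBasis.reindex_apply, Equiv.symm_symm, hTa]
    rw [this]
    rfl
  have hform : ∀ v : EuclideanSpace ℂ (Fin N), (inner ℂ v (T v)).re =
      (∑ i, gridPt N i ^ 2 * ‖v.ofLp i‖ ^ 2 +
        ∑ i, gridPt N i ^ 2 * ‖(Fcd N *ᵥ v.ofLp) i‖ ^ 2) / 2 := by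
    intro v
    rw [EuclideanSpace.inner_eq_star_dotProduct, hTa, dotProduct_comm, Hd_form hN0,
      Complex.ofReal_re]
  have hpos : ∀ v : EuclideanSpace ℂ (Fin N), 0 ≤ (inner ℂ v (T v)).re := fun v => by
    rw [hform]; positivity
  have hBd : ∀ v : EuclideanSpace ℂ (Fin N), (inner ℂ v (T v)).re ≤ 2 * N * ‖v‖ ^ 2 := by
    intro v
    have hb : ∀ u : Fin N → ℂ, ∑ i, gridPt N i ^ 2 * ‖u i‖ ^ 2 ≤ 2 * N * ∑ i, ‖u i‖ ^ 2 := by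
      intro u
      rw [Finset.mul_sum]
      refine Finset.sum_le_sum fun i _ => ?_
      gcongr
      exact gridPt_sq_le hN hN0 i
    have b1 := hb v.ofLp
    have b2 := hb (Fcd N *ᵥ v.ofLp)
    rw [Fcd_norm_sq hN0] at b2
    rw [hform, EuclideanSpace.norm_sq_eq]
    linarith
  set Λ : ℝ := (N : ℝ) / (12800 ^ 2 * 40) with hΛd
  have hΛ : ∀ v, (∀ m ≤ M, inner ℂ (f m) v = 0) → Λ * ‖v‖ ^ 2 ≤ (inner ℂ v (T v)).re := by
    intro v hv
    have hv' : ∀ m ≤ 4 * K, ∑ i, hst N m i * v.ofLp i = 0 := by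
      intro m hm
      have := hv m hm
      rw [EuclideanSpace.inner_eq_star_dotProduct, dotProduct_comm] at this
      rw [← this]
      refine Finset.sum_congr rfl fun i _ => ?_
      simp only [f, Pi.star_apply, hst, Complex.star_def, Complex.conj_ofReal]
    have hc := crude_bound hK hN h1 h2 hv'
    rw [hform, EuclideanSpace.norm_sq_eq]
    refine le_trans ?_ hc
    gcongr
    have : (N : ℝ) / (12800 ^ 2 * 20) = 2 * Λ := by rw [hΛd]; ring
    rw [this]; linarith
  set ε' : ℝ := Real.exp (-(1 / 20 * N)) with hε'
  have hε'0 : 0 < ε' := Real.exp_pos _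
  -- the exponents balance as `2 * 11/80 = 14/80 + 2 * 1/20`
  set κ : ℝ := 4 * N * (4 * tailConst * Real.exp 8 * N ^ 2) ^ 2 * Real.exp (-(14 / 80 * N)) with hκd
  have hκε : 4 * (N : ℝ) * ε ^ 2 = κ * ε' ^ 2 := by
    have he : ε = 4 * tailConst * Real.exp 8 * N ^ 2 * Real.exp (-(11 / 80 * N)) := by
      rw [hε, hδ, show (8 : ℝ) + N / 20 - 3 * N / 16 = 8 + -(11 / 80 * N) by ring, Real.exp_add]
      ring
    have h3 : Real.exp (-(11 / 80 * (N : ℝ))) ^ 2 =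
        Real.exp (-(14 / 80 * N)) * Real.exp (-(1 / 20 * N)) ^ 2 := by
      rw [← Real.exp_nat_mul, ← Real.exp_nat_mul, ← Real.exp_add]; congr 1; push_cast; ring
    rw [he, mul_pow, h3, hκd, hε']; ring
  have hκ0 : 0 ≤ κ := by positivity
  have hκ1 : 4 * N * κ ≤ 1 := by
    refine le_trans (le_of_eq ?_) hsm2
    rw [hκd]; ring
  have hκ2 : κ ≤ 1 / 4 := by nlinarith
  have hMN : (M : ℝ) + 1 ≤ N := by rw [hMc]; linarith
  have hnM' : (n : ℝ) ≤ M := by exact_mod_cast hnM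
  have hκ : 4 * ((M : ℝ) + 1) * ε ^ 2 ≤ κ * ε' ^ 2 := by rw [← hκε]; gcongr
  have hup := eigenvalue_upper w lam hmono T hT hw f n hnN hε'0
    (fun m hm => hres m (by omega))
    (gram_lower hT hY hrec (fun m hm => hres m (by omega)) (fun m hm => hB m (by omega)) hf0
      (le_trans (by gcongr) hη))
    (by
      calc 4 * ((n : ℝ) + 1) * ε ^ 2 ≤ 4 * ((M : ℝ) + 1) * ε ^ 2 := by gcongr
        _ ≤ κ * ε' ^ 2 := hκ
        _ < 1 * ε' ^ 2 := by gcongr; linarith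
        _ = _ := one_mul _)
  have hlo := eigenvalue_lower w lam hmono T hT hw f n hnN hε'0
    (fun m hm => hres m (by omega)) (gram_lower hT hY hrec hres hB hf0 hη)
    (Λ := Λ) (B := 2 * N) (by positivity) (by positivity) hΛ hpos hBd hκ
    (by
      have : (n : ℝ) ≤ Λ / 8 := hn.trans (le_of_eq (by rw [hΛd]; ring))
      nlinarith)
  rw [abs_le]
  constructor <;> linarith

theorem tendsto_pow_mul_exp {a : ℝ} (ha : 0 < a) (k : ℕ) :
    Filter.Tendsto (fun N : ℕ => (N : ℝ) ^ k * Real.exp (-(a * N))) Filter.atTop (nhds 0) := by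
  have h1 : Filter.Tendsto (fun N : ℕ => a * (N : ℝ)) Filter.atTop Filter.atTop :=
    tendsto_natCast_atTop_atTop.const_mul_atTop ha
  have h2 := ((Real.tendsto_pow_mul_exp_neg_atTop_nhds_zero k).comp h1).const_mul ((a ^ k)⁻¹)
  rw [mul_zero] at h2
  refine h2.congr fun N => ?_
  simp only [Function.comp, mul_pow]
  field_simp

/-- The low-lying eigenvalues of the discrete harmonic-oscillator Hamiltonian approximate
`n + 1/2`: for `n ≤ c·N`, the `(n+1)`-th smallest eigenvalue `Eₙᵈ` of the Hermitian matrix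
`Hᵈ` (counting multiplicity, `E₀ᵈ` being the smallest) satisfies
`|Eₙᵈ - (n + 1/2)| ≤ C e^{-βN}`. -/
theorem discrete_qho_eigenvalues :
    ∃ c β C : ℝ, ∃ N₀ : ℕ, 0 < c ∧ c < 1 ∧ 0 < β ∧ 0 < C ∧
      ∀ N : ℕ, N₀ ≤ N → Even N → ∀ n : ℕ, (n : ℝ) ≤ c * N →
        ∀ (hH : (Hd N).IsHermitian) (hnN : n < N),
          |(hH.eigenvalues ∘ Tuple.sort hH.eigenvalues) ⟨n, hnN⟩ - ((n : ℝ) + 1 / 2)|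
            ≤ C * Real.exp (-β * N) := by
  have e1 : ∀ᶠ N : ℕ in Filter.atTop,
      8 * tailConst * Real.exp 16 * (N : ℝ) ^ 4 * Real.exp (-(7 / 80 * N)) ≤ 3 / 4 := by
    have := (tendsto_pow_mul_exp (a := 7 / 80) (by norm_num) 4).const_mul
      (8 * tailConst * Real.exp 16)
    rw [mul_zero] at this
    filter_upwards [this.eventually_le_const (show (0 : ℝ) < 3 / 4 by norm_num)] with N hN
    rwa [← mul_assoc] at hN
  have e2 : ∀ᶠ N : ℕ in Filter.atTop,
      16 * (N : ℝ) ^ 2 * (4 * tailConst * Real.exp 8 * N ^ 2) ^ 2 * Real.exp (-(14 / 80 * N)) ≤ 1 := by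
    have := (tendsto_pow_mul_exp (a := 14 / 80) (by norm_num) 6).const_mul
      (16 * (4 * tailConst * Real.exp 8) ^ 2)
    rw [mul_zero] at this
    filter_upwards [this.eventually_le_const one_pos] with N hN
    refine le_trans (le_of_eq ?_) hN
    ring
  obtain ⟨N₁, hN₁⟩ := Filter.eventually_atTop.1 (e1.and e2)
  refine ⟨1 / (12800 ^ 2 * 320), 1 / 20, 1, max N₁ (400 * (12800 ^ 2 * 40)), by norm_num,
    by norm_num, by norm_num, one_pos, ?_⟩
  intro N hN hev n hn hH hnN
  obtain ⟨hs1, hs2⟩ := hN₁ N ((le_max_left _ _).trans hN)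
  have hbig : 400 * (12800 ^ 2 * 40) ≤ N := (le_max_right _ _).trans hN
  have hbig' : (400 * (12800 ^ 2 * 40) : ℝ) ≤ N := by exact_mod_cast hbig
  have h := eigenvalues_of_large (K := N / 200) hev (by omega) (by omega) (by omega)
    (by rw [le_div_iff₀ (by norm_num)]; exact hbig') hs1 hs2
    (hn.trans (le_of_eq (by ring))) hH hnN
  refine h.trans (le_of_eq ?_)
  rw [one_mul]
  congr 1
  ring

end
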